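/- Let Ω ⊂ ℝ^n be a bounded Lipschitz domain, s ∈ (0,1), f ∈ L²(Ω), g ∈ L¹(ℝ^n\Ω), and suppose there exists a bounded C² function ψ : ℝ^n → ℝ with N_s ψ = g in ℝ^n\closure(Ω). Then there exists a weak solution u ∈ H^s_{Ω,0} of (−Δ)^s u = f in Ω with N_s u = g in ℝ^n\closure(Ω) if and only if the compatibility condition ∫_Ω f dx = − ∫_{ℝ^n\Ω} g dx holds; moreover, when this condition holds, the weak solution is unique up to an additive constant. -/

import Mathlib

/-!
Write `E(u, v)` for the form `gagliardo2`, integrated over `Q(Ω)`.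

The compatibility condition is the weak formulation tested with `v = 1`, for which `E(u, 1) = 0`.

Conversely, the Neumann datum is removed by subtracting `ψ`. With `H = (-Δ)^s ψ`, bounded on `Ω`,
the key identity (`integration_by_parts`) is
`c/2 · E(ψ, v) = ∫_Ω H v + ∫_{Ωᶜ} g v` for every `v ∈ H^s_{Ω,g}`.
For bounded `v` the kernel is cut off at `|x - y| < ε`; Fubini then gives the identity with
truncated operators (`cut_identity`) and `ε → 0`. In `Ω` the truncated Laplacians are uniformly
bounded after symmetrization. Outside `Ω` the truncated normal derivative equals `g` except on the
exterior layer of width `ε`; there it is `o(1/ε)`, while the layer has volume `O(ε)` because `Ω` is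
Lipschitz (`volume_layer_le`). Unbounded `v` are reached by truncation and dominated convergence.

The identity with `v = 1` shows that `∫_Ω (f - H) = 0` under the compatibility condition. For data of
zero mean, the functional `v ↦ ∫_Ω (f - H) v` depends only on the increments of `v` and is bounded in
the energy norm; the weighted increments form a closed subspace of `L²(Q(Ω))`
(`isClosed_incrSpace`), so it is represented by some `w` of finite energy
(`exists_energy_representative`). Then `u = w + ψ` is a weak solution.

For uniqueness, the difference `w` of two solutions satisfies `E(w, v) = 0` for all admissible `v`.
It need not be admissible itself when `g ≠ 0`, but its truncations are, and
`E(w, T_k w) ≥ E(T_k w, T_k w)` forces every `T_k w` to be constant.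
-/

open MeasureTheory Filter Set Bornology
open scoped Topology ENNReal NNReal Pointwise symmDiff

noncomputable section

/-- `ℝ^n` as a Euclidean space. -/
abbrev En (n : ℕ) := EuclideanSpace ℝ (Fin n)

/-- The normalization constant `c_{n,s}` of the fractional Laplacian. -/
def cns (n : ℕ) (s : ℝ) : ℝ :=
  4 ^ s * Real.Gamma ((n : ℝ) / 2 + s) / (Real.pi ^ ((n : ℝ) / 2) * |Real.Gamma (-s)|)

/-- `Q(Ω) = ℝ^{2n} \ (CΩ × CΩ)`. -/
def Qset (n : ℕ) (Ω : Set (En n)) : Set (En n × En n) := (Ωᶜ ×ˢ Ωᶜ)ᶜ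

/-- The kernel `|x-y|^{n+2s}`. -/
def nsKer (n : ℕ) (s : ℝ) (x y : En n) : ℝ := dist x y ^ ((n : ℝ) + 2 * s)

/-- The nonlocal normal derivative `N_s u (x) = c_{n,s} ∫_Ω (u x - u y)/|x-y|^{n+2s} dy`. -/
def NsD (n : ℕ) (s : ℝ) (Ω : Set (En n)) (u : En n → ℝ) (x : En n) : ℝ :=
  cns n s * ∫ y in Ω, (u x - u y) / nsKer n s x y

/-- The renormalized nonlocal normal derivative `Ñ_s u`. -/
def NsTilde (n : ℕ) (s : ℝ) (Ω : Set (En n)) (u : En n → ℝ) (x : En n) : ℝ :=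
  NsD n s Ω u x / (cns n s * ∫ y in Ω, (nsKer n s x y)⁻¹)

/-- The fractional Laplacian `(-Δ)^s u (x)`, defined as a principal value. -/
def fracLap (n : ℕ) (s : ℝ) (u : En n → ℝ) (x : En n) : ℝ :=
  cns n s * limUnder (𝓝[>] (0 : ℝ))
    (fun ε => ∫ y in {y : En n | ε ≤ dist x y}, (u x - u y) / nsKer n s x y)

/-- The Gagliardo-type bilinear form over `Q(Ω)`. -/
def gagliardo2 (n : ℕ) (s : ℝ) (Ω : Set (En n)) (u v : En n → ℝ) : ℝ :=
  ∫ p in Qset n Ω, (u p.1 - u p.2) * (v p.1 - v p.2) / nsKer n s p.1 p.2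

/-- Membership in the space `H^s_{Ω,g}`. -/
def InHs (n : ℕ) (s : ℝ) (Ω : Set (En n)) (g : En n → ℝ) (u : En n → ℝ) : Prop :=
  Measurable u ∧
  IntegrableOn (fun x => u x ^ 2) Ω ∧
  IntegrableOn (fun x => |g x| * u x ^ 2) Ωᶜ ∧
  IntegrableOn (fun p : En n × En n => (u p.1 - u p.2) ^ 2 / nsKer n s p.1 p.2) (Qset n Ω)

/-- The squared norm of `H^s_{Ω,g}`. -/
def hsNormSq (n : ℕ) (s : ℝ) (Ω : Set (En n)) (g : En n → ℝ) (u : En n → ℝ) : ℝ :=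
  (∫ x in Ω, u x ^ 2) + (∫ x in Ωᶜ, |g x| * u x ^ 2) + gagliardo2 n s Ω u u

/-- The scalar product of `H^s_{Ω,g}`. -/
def hsInner (n : ℕ) (s : ℝ) (Ω : Set (En n)) (g : En n → ℝ) (u v : En n → ℝ) : ℝ :=
  (∫ x in Ω, u x * v x) + (∫ x in Ωᶜ, |g x| * (u x * v x)) + gagliardo2 n s Ω u v

/-- `u` is a weak solution of `(-Δ)^s u = f` in `Ω`, `N_s u = g` in `ℝ^n \ Ω̄`. -/
def IsWeakSol (n : ℕ) (s : ℝ) (Ω : Set (En n)) (f g : En n → ℝ) (u : En n → ℝ) : Prop :=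
  InHs n s Ω (fun _ => 0) u ∧
  ∀ v : En n → ℝ, InHs n s Ω g v →
    cns n s / 2 * gagliardo2 n s Ω u v = (∫ x in Ω, f x * v x) + ∫ x in Ωᶜ, g x * v x

/-- Last coordinate of a point of `ℝ^n`. -/
def lastCoord {n : ℕ} (x : En n) : ℝ :=
  if h : 0 < n then x ⟨n - 1, Nat.sub_lt h Nat.one_pos⟩ else 0

/-- The first `n-1` coordinates of a point of `ℝ^n`. -/
def frontCoords {n : ℕ} (x : En n) : EuclideanSpace ℝ (Fin (n - 1)) :=
  (WithLp.equiv 2 (Fin (n - 1) → ℝ)).symm fun i => x (Fin.castLE (Nat.sub_le n 1) i)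

/-- A bounded Lipschitz domain: open, bounded, nonempty, and near each boundary point the
domain is (up to a rigid motion) the subgraph of a Lipschitz function. -/
def IsLipschitzDomain (n : ℕ) (Ω : Set (En n)) : Prop :=
  IsOpen Ω ∧ IsBounded Ω ∧ Ω.Nonempty ∧
  ∀ p ∈ frontier Ω, ∃ (φ : En n ≃ᵢ En n) (γ : EuclideanSpace ℝ (Fin (n - 1)) → ℝ)
    (L : ℝ≥0) (r : ℝ), 0 < r ∧ LipschitzWith L γ ∧ φ p = 0 ∧
    (φ '' Ω) ∩ Metric.ball 0 r = {x : En n | lastCoord x < γ (frontCoords x)} ∩ Metric.ball 0 r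

/-- A bounded domain with `C¹` boundary. -/
def IsC1Domain (n : ℕ) (Ω : Set (En n)) : Prop :=
  IsOpen Ω ∧ IsBounded Ω ∧ Ω.Nonempty ∧
  ∀ p ∈ frontier Ω, ∃ (φ : En n ≃ᵢ En n) (γ : EuclideanSpace ℝ (Fin (n - 1)) → ℝ)
    (r : ℝ), 0 < r ∧ ContDiff ℝ 1 γ ∧ φ p = 0 ∧
    (φ '' Ω) ∩ Metric.ball 0 r = {x : En n | lastCoord x < γ (frontCoords x)} ∩ Metric.ball 0 r

/-- The Laplacian `Δu = ∑ ∂²u/∂xᵢ²`. -/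
def lapl {n : ℕ} (u : En n → ℝ) (x : En n) : ℝ :=
  ∑ i : Fin n,
    fderiv ℝ (fun y => fderiv ℝ u y (EuclideanSpace.single i (1 : ℝ))) x
      (EuclideanSpace.single i (1 : ℝ))

/-- The surface measure `ω_{n-1}` of the unit sphere of `ℝ^n`. -/
def sphereSurf (n : ℕ) : ℝ := n * (volume (Metric.ball (0 : En n) 1)).toReal

/-- The unit vector `e_n`. -/
def eLast (n : ℕ) : En n :=
  if h : 0 < n then EuclideanSpace.single (⟨n - 1, Nat.sub_lt h Nat.one_pos⟩ : Fin n) (1 : ℝ)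
  else 0

/-- The halfspace `Π = {x_n < 0}`. -/
def halfSpaceNeg (n : ℕ) : Set (En n) := {x : En n | lastCoord x < 0}

end

/-! ### Volume of the exterior boundary layer -/

lemma lastCoord_add_smul {n : ℕ} (hn : 0 < n) (x : En n) (t : ℝ) :
    lastCoord (x + t • eLast n) = lastCoord x + t := by
  simp [lastCoord, eLast, hn]

lemma frontCoords_add_smul {n : ℕ} (hn : 0 < n) (x : En n) (t : ℝ) :
    frontCoords (x + t • eLast n) = frontCoords x := by
  ext i
  have hi : (Fin.castLE (Nat.sub_le n 1) i) ≠ ⟨n - 1, Nat.sub_lt hn Nat.one_pos⟩ := by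
    intro h
    have := congrArg Fin.val h
    have h2 := i.2
    simp at this
    omega
  simp [frontCoords, eLast, hn, hi]

lemma abs_lastCoord_sub_le {n : ℕ} (x y : En n) : |lastCoord x - lastCoord y| ≤ dist x y := by
  unfold lastCoord
  split_ifs with h
  · rw [dist_eq_norm]
    exact PiLp.norm_apply_le (x - y) _
  · simp

lemma dist_frontCoords_le {n : ℕ} (x y : En n) :
    dist (frontCoords x) (frontCoords y) ≤ dist x y := by
  rw [EuclideanSpace.dist_eq, EuclideanSpace.dist_eq]
  apply Real.sqrt_le_sqrt
  have hinj : Function.Injective (Fin.castLE (Nat.sub_le n 1)) := Fin.castLE_injective _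
  calc ∑ i, dist (frontCoords x i) (frontCoords y i) ^ 2
      = ∑ j ∈ Finset.univ.map ⟨_, hinj⟩, dist (x j) (y j) ^ 2 := by
        rw [Finset.sum_map]; rfl
    _ ≤ _ := Finset.sum_le_sum_of_subset_of_nonneg (Finset.subset_univ _)
        (fun _ _ _ => by positivity)

lemma continuous_lastCoord {n : ℕ} : Continuous (lastCoord : En n → ℝ) := by
  refine (LipschitzWith.of_dist_le_mul (K := 1) fun x y => ?_).continuous
  simpa [Real.dist_eq] using abs_lastCoord_sub_le x y

lemma continuous_frontCoords {n : ℕ} : Continuous (frontCoords : En n → _) := by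
  refine (LipschitzWith.of_dist_le_mul (K := 1) fun x y => ?_).continuous
  simpa using dist_frontCoords_le x y

/-- A slab of height `δ` above a continuous graph has volume `O(δ)` inside a ball: `⌊1/δ⌋₊` of its
vertical translates are pairwise disjoint and fit in a slightly larger ball. -/
lemma volume_slab_le {n : ℕ} (hn : 0 < n) {γ : EuclideanSpace ℝ (Fin (n - 1)) → ℝ}
    (hγ : Continuous γ) (r δ : ℝ) (hδ : 0 < δ) (hδ1 : δ ≤ 1) :
    volume {z : En n | γ (frontCoords z) ≤ lastCoord z ∧
        lastCoord z < γ (frontCoords z) + δ ∧ z ∈ Metric.ball 0 r}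
      ≤ ENNReal.ofReal (2 * δ) * volume (Metric.ball (0 : En n) (r + 1)) := by
  set S := {z : En n | γ (frontCoords z) ≤ lastCoord z ∧
        lastCoord z < γ (frontCoords z) + δ ∧ z ∈ Metric.ball 0 r} with hS
  have hSm : MeasurableSet S := by
    have h1 : Continuous fun z : En n => γ (frontCoords z) := hγ.comp continuous_frontCoords
    exact (measurableSet_le h1.measurable continuous_lastCoord.measurable).inter
      ((measurableSet_lt continuous_lastCoord.measurable
        (h1.add continuous_const).measurable).inter measurableSet_ball)
  have hnorm : ‖eLast n‖ = 1 := by simp [eLast, hn]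
  set N := ⌊1 / δ⌋₊ with hN
  have hNle : (N : ℝ) * δ ≤ 1 := by
    have : (N : ℝ) ≤ 1 / δ := Nat.floor_le (by positivity)
    rwa [le_div_iff₀ hδ] at this
  have hN1 : (1 : ℝ) ≤ N := by
    have : 1 ≤ N := Nat.one_le_floor_iff _ |>.2 (by rw [le_div_iff₀ hδ]; linarith)
    exact_mod_cast this
  have hNge : 1 ≤ 2 * δ * N := by
    have : 1 / δ < N + 1 := Nat.lt_floor_add_one _
    rw [div_lt_iff₀ hδ] at this
    nlinarith
  let T : ℕ → Set (En n) := fun j => (fun z => z + (-(j * δ) : ℝ) • eLast n) ⁻¹' S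
  have hTvol : ∀ j, volume (T j) = volume S := fun j => measure_preimage_add_right _ _ _
  have hTm : ∀ j, MeasurableSet (T j) := fun j => hSm.preimage (by fun_prop)
  have hTmem : ∀ j z, z ∈ T j → γ (frontCoords z) + j * δ ≤ lastCoord z ∧
      lastCoord z < γ (frontCoords z) + j * δ + δ := by
    intro j z hz
    have hz' : z + (-(j * δ) : ℝ) • eLast n ∈ S := hz
    rw [hS, Set.mem_ofPred_eq, lastCoord_add_smul hn, frontCoords_add_smul hn] at hz'
    constructor <;> linarith [hz'.1, hz'.2.1]
  have key : ∀ i j : ℕ, i < j → Disjoint (T i) (T j) := by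
    intro i j hij
    rw [Set.disjoint_left]
    intro z hi hj
    have h1 := (hTmem i z hi).2
    have h2 := (hTmem j z hj).1
    have : (i : ℝ) + 1 ≤ j := by exact_mod_cast hij
    nlinarith
  have hdisj : ((Finset.range N : Finset ℕ) : Set ℕ).PairwiseDisjoint T := by
    intro i _ j _ hij
    rcases lt_or_gt_of_ne hij with h | h
    · exact key i j h
    · exact (key j i h).symm
  have hsub : (⋃ j ∈ Finset.range N, T j) ⊆ Metric.ball (0 : En n) (r + 1) := by
    intro z hz
    simp only [Set.mem_iUnion, Finset.mem_range] at hz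
    obtain ⟨j, hj, hz⟩ := hz
    have hz' : z + (-(j * δ) : ℝ) • eLast n ∈ Metric.ball (0 : En n) r := hz.2.2
    rw [mem_ball_zero_iff] at hz' ⊢
    have : ‖z‖ ≤ ‖z + (-(j * δ) : ℝ) • eLast n‖ + ‖(j * δ : ℝ) • eLast n‖ := by
      refine le_trans (le_of_eq ?_) (norm_add_le _ _)
      congr 1
      rw [neg_smul]; abel
    rw [norm_smul, hnorm, Real.norm_of_nonneg (by positivity), mul_one] at this
    have hj' : (j : ℝ) ≤ N := by exact_mod_cast hj.le
    nlinarith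
  have hcard : (N : ℝ≥0∞) * volume S ≤ volume (Metric.ball (0 : En n) (r + 1)) := by
    calc (N : ℝ≥0∞) * volume S = ∑ j ∈ Finset.range N, volume (T j) := by simp [hTvol]
      _ = volume (⋃ j ∈ Finset.range N, T j) :=
        (measure_biUnion_finset hdisj fun j _ => hTm j).symm
      _ ≤ _ := measure_mono hsub
  calc volume S = 1 * volume S := (one_mul _).symm
    _ ≤ (ENNReal.ofReal (2 * δ) * N) * volume S := by
      gcongr
      rw [← ENNReal.ofReal_natCast, ← ENNReal.ofReal_mul (by positivity), ← ENNReal.ofReal_one]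
      exact ENNReal.ofReal_le_ofReal hNge
    _ = ENNReal.ofReal (2 * δ) * (N * volume S) := mul_assoc _ _ _
    _ ≤ _ := by gcongr

lemma isometryEquiv_measurePreserving {n : ℕ} (φ : En n ≃ᵢ En n) :
    MeasurePreserving φ (volume : Measure (En n)) volume := by
  have := IsometryEquiv.measurePreserving_euclideanHausdorffMeasure φ n
  rwa [EuclideanSpace.euclideanHausdorffMeasure_eq_volume] at this

lemma exists_frontier_dist_lt {n : ℕ} {Ω : Set (En n)} {x y : En n}
    (hx : x ∉ Ω) (hy : y ∈ Ω) {ε : ℝ} (h : dist x y < ε) :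
    ∃ p ∈ frontier Ω, dist x p < ε ∧ dist y p < ε := by
  have hpre : IsPreconnected (segment ℝ x y) := (convex_segment x y).isPreconnected
  have hne : (segment ℝ x y ∩ frontier Ω).Nonempty := by
    by_contra hcon
    rw [Set.not_nonempty_iff_eq_empty] at hcon
    have h1 : segment ℝ x y ⊆ interior Ω ∪ (closure Ω)ᶜ := by
      intro z hz
      by_contra hz2
      simp only [Set.mem_union, Set.mem_compl_iff, not_or, not_not] at hz2
      have : z ∈ segment ℝ x y ∩ frontier Ω := ⟨hz, hz2.2, hz2.1⟩
      rw [hcon] at this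
      exact this
    have hy1 : y ∈ interior Ω := by
      rcases h1 (right_mem_segment ℝ x y) with h2 | h2
      · exact h2
      · exact absurd (subset_closure hy) h2
    have hx1 : x ∈ (closure Ω)ᶜ := by
      rcases h1 (left_mem_segment ℝ x y) with h2 | h2
      · exact absurd (interior_subset h2) hx
      · exact h2
    obtain ⟨z, -, hz1, hz2⟩ := hpre _ _ isOpen_interior isClosed_closure.isOpen_compl h1
      ⟨y, right_mem_segment ℝ x y, hy1⟩ ⟨x, left_mem_segment ℝ x y, hx1⟩
    exact hz2 (subset_closure (interior_subset hz1))
  obtain ⟨p, hp, hpf⟩ := hne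
  have := dist_add_dist_of_mem_segment hp
  refine ⟨p, hpf, ?_, ?_⟩
  · linarith [dist_nonneg (x := p) (y := y)]
  · rw [dist_comm y p]; linarith [dist_nonneg (x := x) (y := p)]

/-- The exterior layer of width `ε` around a bounded Lipschitz domain has volume `O(ε)`: finitely
many boundary charts cover it, and in each chart it lies in a slab of height `O(ε)` above the
graph. -/
lemma volume_layer_le {n : ℕ} (hn : 0 < n) {Ω : Set (En n)} (hΩ : IsLipschitzDomain n Ω) :
    ∃ C : ℝ, 0 ≤ C ∧ ∃ ε₀ : ℝ, 0 < ε₀ ∧ ∀ ε, 0 < ε → ε ≤ ε₀ →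
      volume (Metric.thickening ε Ω \ Ω) ≤ ENNReal.ofReal (C * ε) := by
  obtain ⟨-, hb, -, hloc⟩ := hΩ
  have hcomp : IsCompact (frontier Ω) :=
    Metric.isCompact_of_isClosed_isBounded isClosed_frontier
      (hb.closure.subset frontier_subset_closure)
  choose! φ γ L r hr hL hφ0 hgraph using hloc
  obtain ⟨t, htsub, htcov⟩ := hcomp.elim_nhds_subcover (fun p => Metric.ball p (r p / 2))
    (fun p hp => Metric.ball_mem_nhds p (by have := hr p hp; linarith))
  -- Widths below `w p` keep both points in the chart at `p` and the slab height at most `1`.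
  let w : En n → ℝ := fun p => min (r p / 2) (1 / ((L p : ℝ) + 1))
  have hw : ∀ p ∈ t, 0 < w p := fun p hp =>
    lt_min (by have := hr p (htsub p hp); linarith) (by positivity)
  obtain ⟨ε₀, hε₀, hε₀w⟩ : ∃ ε₀ : ℝ, 0 < ε₀ ∧ ∀ p ∈ t, ε₀ ≤ w p := by
    rcases t.eq_empty_or_nonempty with rfl | hne
    · exact ⟨1, one_pos, by simp⟩
    · obtain ⟨p, hp, hmin⟩ := t.exists_min_image w hne
      exact ⟨w p, hw p hp, hmin⟩
  let V : En n → ℝ := fun p => (volume (Metric.ball (0 : En n) (r p + 1))).toReal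
  refine ⟨∑ p ∈ t, 2 * ((L p : ℝ) + 1) * V p, Finset.sum_nonneg fun p _ => by positivity,
    ε₀, hε₀, fun ε hε hεle => ?_⟩
  let S : En n → Set (En n) := fun p => {z : En n | γ p (frontCoords z) ≤ lastCoord z ∧
        lastCoord z < γ p (frontCoords z) + ((L p : ℝ) + 1) * ε ∧ z ∈ Metric.ball 0 (r p)}
  have hsub : Metric.thickening ε Ω \ Ω ⊆ ⋃ p ∈ t, φ p ⁻¹' S p := by
    rintro x ⟨hx, hxΩ⟩
    obtain ⟨y, hy, hxy⟩ := Metric.mem_thickening_iff.1 hx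
    obtain ⟨q, hq, hxq, hyq⟩ := exists_frontier_dist_lt hxΩ hy hxy
    obtain ⟨p, hp, hqp⟩ := Set.mem_iUnion₂.1 (htcov hq)
    rw [Metric.mem_ball] at hqp
    have hpf := htsub p hp
    have hεr : ε ≤ r p / 2 := hεle.trans ((hε₀w p hp).trans (min_le_left _ _))
    have hball : ∀ z, dist z q < ε → φ p z ∈ Metric.ball (0 : En n) (r p) := by
      intro z hz
      rw [Metric.mem_ball, ← hφ0 p hpf, (φ p).dist_eq]
      linarith [dist_triangle z q p]
    have hgx : ¬ lastCoord (φ p x) < γ p (frontCoords (φ p x)) := by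
      intro hlt
      have : φ p x ∈ (φ p '' Ω) ∩ Metric.ball 0 (r p) := by
        rw [hgraph p hpf]; exact ⟨hlt, hball x hxq⟩
      obtain ⟨z, hz, hzx⟩ := this.1
      exact hxΩ ((φ p).injective hzx ▸ hz)
    have hgy : lastCoord (φ p y) < γ p (frontCoords (φ p y)) := by
      have : φ p y ∈ (φ p '' Ω) ∩ Metric.ball 0 (r p) := ⟨⟨y, hy, rfl⟩, hball y hyq⟩
      rw [hgraph p hpf] at this
      exact this.1
    refine Set.mem_iUnion₂.2 ⟨p, hp, not_lt.1 hgx, ?_, hball x hxq⟩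
    have h1 := (abs_le.1 (abs_lastCoord_sub_le (φ p x) (φ p y))).2
    have h2 := (hL p hpf).dist_le_mul (frontCoords (φ p y)) (frontCoords (φ p x))
    have h3 := dist_frontCoords_le (φ p y) (φ p x)
    rw [dist_comm (φ p y), (φ p).dist_eq] at h3
    rw [(φ p).dist_eq] at h1
    rw [Real.dist_eq] at h2
    have h4 := (abs_le.1 h2).2
    have h5 : (L p : ℝ) * dist (frontCoords (φ p y)) (frontCoords (φ p x)) ≤ L p * ε :=
      mul_le_mul_of_nonneg_left (by linarith) (L p).2
    nlinarith
  have hSvol : ∀ p ∈ t, volume (φ p ⁻¹' S p)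
      ≤ ENNReal.ofReal (2 * ((L p : ℝ) + 1) * V p * ε) := by
    intro p hp
    have hpf := htsub p hp
    have hle1 : ((L p : ℝ) + 1) * ε ≤ 1 := by
      have : ε ≤ 1 / ((L p : ℝ) + 1) := hεle.trans ((hε₀w p hp).trans (min_le_right _ _))
      rw [le_div_iff₀ (by positivity)] at this
      linarith
    have hpre : volume (φ p ⁻¹' S p) = volume (S p) :=
      MeasurePreserving.measure_preimage_equiv
        (f := (φ p).toHomeomorph.toMeasurableEquiv) (isometryEquiv_measurePreserving (φ p)) (S p)
    rw [hpre]
    refine (volume_slab_le hn (hL p hpf).continuous (r p) _ (by positivity) hle1).trans ?_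
    rw [← ENNReal.ofReal_toReal (measure_ball_lt_top (μ := volume) (x := (0 : En n))).ne,
      ← ENNReal.ofReal_mul (by positivity)]
    apply ENNReal.ofReal_le_ofReal
    apply le_of_eq
    ring
  calc volume (Metric.thickening ε Ω \ Ω) ≤ volume (⋃ p ∈ t, φ p ⁻¹' S p) := measure_mono hsub
    _ ≤ ∑ p ∈ t, volume (φ p ⁻¹' S p) := measure_biUnion_finset_le _ _
    _ ≤ ∑ p ∈ t, ENNReal.ofReal (2 * ((L p : ℝ) + 1) * V p * ε) := Finset.sum_le_sum hSvol
    _ = _ := by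
      rw [← ENNReal.ofReal_sum_of_nonneg (fun p _ => by positivity), Finset.sum_mul]

lemma volume_frontier_eq_zero {n : ℕ} (hn : 0 < n) {Ω : Set (En n)}
    (hΩ : IsLipschitzDomain n Ω) : volume (frontier Ω) = 0 := by
  obtain ⟨C, hC, ε₀, hε₀, h⟩ := volume_layer_le hn hΩ
  have hlim : Tendsto (fun ε : ℝ => ENNReal.ofReal (C * ε)) (𝓝[>] 0) (𝓝 0) := by
    have : Tendsto (fun ε : ℝ => ENNReal.ofReal (C * ε)) (𝓝 0) (𝓝 (ENNReal.ofReal (C * 0))) :=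
      (ENNReal.continuous_ofReal.comp (continuous_const.mul continuous_id)).tendsto 0
    simpa using this.mono_left nhdsWithin_le_nhds
  refine le_antisymm (ge_of_tendsto hlim ?_) (zero_le)
  filter_upwards [Ioc_mem_nhdsGT hε₀] with ε hε
  refine (measure_mono ?_).trans (h ε hε.1 hε.2)
  rw [hΩ.1.frontier_eq]
  exact Set.sdiff_subset_sdiff_left (Metric.closure_subset_thickening hε.1 Ω)

/-! ### Kernels, energies and truncations -/

lemma cns_pos {n : ℕ} {s : ℝ} (hs : s ∈ Set.Ioo (0 : ℝ) 1) : 0 < cns n s := by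
  have hΓ : Real.Gamma (-s) ≠ 0 := by
    apply Real.Gamma_ne_zero
    intro m hm
    have h1 : s = m := by linarith
    have h2 : (0 : ℝ) < m := h1 ▸ hs.1
    have h3 : (m : ℝ) < 1 := h1 ▸ hs.2
    have h4 : 0 < m := by exact_mod_cast h2
    have h5 : m < 1 := by exact_mod_cast h3
    omega
  have h1 : 0 < Real.Gamma ((n : ℝ) / 2 + s) :=
    Real.Gamma_pos_of_pos (by have := hs.1; positivity)
  unfold cns
  positivity

lemma nsKer_nonneg {n : ℕ} {s : ℝ} (x y : En n) : 0 ≤ nsKer n s x y :=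
  Real.rpow_nonneg dist_nonneg _

lemma nsKer_pos {n : ℕ} {s : ℝ} {x y : En n} (h : x ≠ y) : 0 < nsKer n s x y :=
  Real.rpow_pos_of_pos (dist_pos.2 h) _

lemma nsKer_comm {n : ℕ} {s : ℝ} (x y : En n) : nsKer n s x y = nsKer n s y x := by
  simp [nsKer, dist_comm]

lemma measurable_nsKer {n : ℕ} {s : ℝ} :
    Measurable fun p : En n × En n => nsKer n s p.1 p.2 := by
  unfold nsKer; fun_prop

lemma measurableSet_Qset {n : ℕ} {Ω : Set (En n)} (h : MeasurableSet Ω) :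
    MeasurableSet (Qset n Ω) := (h.compl.prod h.compl).compl

/-- The radial majorant `min(1,|z|²)/|z|^{n+2s}` used to dominate every singular integral. -/
noncomputable def majorant (n : ℕ) (s : ℝ) (z : En n) : ℝ :=
  min 1 (‖z‖ ^ 2) / ‖z‖ ^ ((n : ℝ) + 2 * s)

lemma majorant_nonneg {n : ℕ} {s : ℝ} (z : En n) : 0 ≤ majorant n s z := by
  unfold majorant; positivity

lemma integrable_majorant {n : ℕ} (hn : 0 < n) {s : ℝ} (hs : s ∈ Set.Ioo (0 : ℝ) 1) :
    Integrable (majorant n s) := by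
  have : Nonempty (Fin n) := ⟨⟨0, hn⟩⟩
  have key := (integrable_fun_norm_addHaar (volume : Measure (En n))
    (f := fun r : ℝ => min 1 (r ^ 2) / r ^ ((n : ℝ) + 2 * s))).2
  refine key ?_
  rw [finrank_euclideanSpace_fin]
  rw [← Set.Ioc_union_Ioi_eq_Ioi (zero_le_one' ℝ)]
  have hpow : ∀ y : ℝ, 0 < y → y ^ (n - 1) = y ^ ((n : ℝ) - 1) := by
    intro y hy
    rw [← Real.rpow_natCast, Nat.cast_sub hn, Nat.cast_one]
  refine IntegrableOn.union ?_ ?_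
  · have h1 : IntegrableOn (fun y : ℝ => y ^ (1 - 2 * s)) (Set.Ioc 0 1) := by
      rw [← intervalIntegrable_iff_integrableOn_Ioc_of_le zero_le_one]
      exact intervalIntegral.intervalIntegrable_rpow' (by linarith [hs.2])
    refine h1.congr_fun (fun y hy => ?_) measurableSet_Ioc
    have hy0 := hy.1
    simp only [smul_eq_mul]
    rw [min_eq_right (by nlinarith [hy.1, hy.2]), hpow y hy0, ← Real.rpow_natCast y 2,
      ← Real.rpow_sub hy0, ← Real.rpow_add hy0]
    congr 1
    push_cast
    ring
  · have h1 : IntegrableOn (fun y : ℝ => y ^ (-1 - 2 * s)) (Set.Ioi 1) :=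
      integrableOn_Ioi_rpow_of_lt (by linarith [hs.1]) one_pos
    refine h1.congr_fun (fun y hy => ?_) measurableSet_Ioi
    have hy1 : 1 < y := hy
    have hy0 : 0 < y := by linarith
    simp only [smul_eq_mul]
    rw [min_eq_left (by nlinarith), hpow y hy0, one_div, ← Real.rpow_neg hy0.le,
      ← Real.rpow_add hy0]
    congr 1
    ring

lemma majorant_sub {n : ℕ} {s : ℝ} (x y : En n) :
    majorant n s (x - y) = min 1 (dist x y ^ 2) / nsKer n s x y := by
  simp [majorant, nsKer, dist_eq_norm]

/-- A measurable function dominated on `Ω × ℝⁿ` by an integrable function of `x - y` is integrable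
there when `Ω` has finite volume. -/
lemma integrableOn_prod_of_le {n : ℕ} {Ω : Set (En n)}
    (hfin : volume Ω ≠ ∞) {m : En n → ℝ} (hm : Integrable m) {F : En n × En n → ℝ}
    (hF : Measurable F) (hle : ∀ x ∈ Ω, ∀ y, |F (x, y)| ≤ m (x - y)) (hΩ : MeasurableSet Ω) :
    IntegrableOn F (Ω ×ˢ (Set.univ : Set (En n))) := by
  have : IsFiniteMeasure (volume.restrict Ω : Measure (En n)) := ⟨by simpa using hfin.lt_top⟩
  have hres : (volume : Measure (En n × En n)).restrict (Ω ×ˢ Set.univ)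
      = (volume.restrict Ω).prod volume := by
    rw [Measure.volume_eq_prod, ← Measure.prod_restrict, Measure.restrict_univ]
  unfold IntegrableOn
  rw [hres, integrable_prod_iff hF.aestronglyMeasurable]
  constructor
  · filter_upwards [ae_restrict_mem hΩ] with x hx
    refine (hm.comp_sub_left x).mono'
      (hF.comp measurable_prodMk_left).aestronglyMeasurable (ae_of_all _ fun y => ?_)
    simpa using hle x hx y
  · refine Integrable.mono' (g := fun _ => ∫ z, m z) (integrable_const _) ?_ ?_
    · exact (hF.norm.aestronglyMeasurable).integral_prod_right'
    · filter_upwards [ae_restrict_mem hΩ] with x hx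
      rw [Real.norm_of_nonneg (integral_nonneg fun _ => norm_nonneg _)]
      rw [← integral_sub_left_eq_self m volume x]
      refine integral_mono_of_nonneg (ae_of_all _ fun _ => norm_nonneg _) (hm.comp_sub_left x)
        (ae_of_all _ fun y => ?_)
      simpa using hle x hx y

lemma Qset_eq {n : ℕ} (Ω : Set (En n)) :
    Qset n Ω = (Ω ×ˢ Set.univ) ∪ (Ωᶜ ×ˢ Ω) := by
  ext ⟨x, y⟩
  simp only [Qset, Set.mem_compl_iff, Set.mem_prod, Set.mem_union, Set.mem_univ]
  tauto

lemma Qset_subset {n : ℕ} (Ω : Set (En n)) :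
    Qset n Ω ⊆ (Ω ×ˢ Set.univ) ∪ (Set.univ ×ˢ Ω) := by
  rintro ⟨x, y⟩
  simp only [Qset, Set.mem_compl_iff, Set.mem_prod, Set.mem_union, Set.mem_univ]
  tauto

lemma swap_mem_Qset {n : ℕ} {Ω : Set (En n)} (p : En n × En n) :
    p.swap ∈ Qset n Ω ↔ p ∈ Qset n Ω := by
  simp only [Qset, Set.mem_compl_iff, Set.mem_prod, Prod.fst_swap, Prod.snd_swap]
  tauto

lemma measurePreserving_swap_Qset {n : ℕ} {Ω : Set (En n)} (hΩ : MeasurableSet Ω) :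
    MeasurePreserving (Prod.swap : En n × En n → En n × En n)
      (volume.restrict (Qset n Ω)) (volume.restrict (Qset n Ω)) := by
  have h := (Measure.measurePreserving_swap (μ := (volume : Measure (En n)))
    (ν := (volume : Measure (En n)))).restrict_preimage (measurableSet_Qset hΩ)
  have h2 : Prod.swap ⁻¹' Qset n Ω = Qset n Ω := by
    ext p; exact swap_mem_Qset p
  rwa [h2] at h

lemma integrableOn_Qset_of_le {n : ℕ} {Ω : Set (En n)}
    (hfin : volume Ω ≠ ∞) {m : En n → ℝ} (hm : Integrable m) {F : En n × En n → ℝ}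
    (hF : Measurable F) (hle : ∀ x ∈ Ω, ∀ y, |F (x, y)| ≤ m (x - y))
    (hle' : ∀ x ∈ Ω, ∀ y, |F (y, x)| ≤ m (x - y)) (hΩ : MeasurableSet Ω) :
    IntegrableOn F (Qset n Ω) := by
  refine IntegrableOn.mono_set (IntegrableOn.union ?_ ?_) (Qset_subset Ω)
  · exact integrableOn_prod_of_le hfin hm hF hle hΩ
  · have h := integrableOn_prod_of_le hfin hm (hF.comp measurable_swap)
      (F := F ∘ Prod.swap) (by simpa using hle') hΩ
    have hp : Prod.swap ⁻¹' (Set.univ ×ˢ Ω : Set (En n × En n)) = Ω ×ˢ Set.univ := by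
      ext p; simp
    have hmp := (Measure.measurePreserving_swap (μ := (volume : Measure (En n)))
      (ν := (volume : Measure (En n)))).restrict_preimage (MeasurableSet.univ.prod hΩ)
    rw [hp] at hmp
    exact (hmp.integrable_comp hF.aestronglyMeasurable).1 h

/-- Finiteness of the Gagliardo energy over `Q(Ω)`. -/
def FinEnergy (n : ℕ) (s : ℝ) (Ω : Set (En n)) (u : En n → ℝ) : Prop :=
  IntegrableOn (fun p : En n × En n => (u p.1 - u p.2) ^ 2 / nsKer n s p.1 p.2) (Qset n Ω)

lemma integrableOn_gagliardo {n : ℕ} {s : ℝ} {Ω : Set (En n)} {u v : En n → ℝ}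
    (hu : Measurable u) (hv : Measurable v) (hue : FinEnergy n s Ω u) (hve : FinEnergy n s Ω v) :
    IntegrableOn (fun p : En n × En n =>
      (u p.1 - u p.2) * (v p.1 - v p.2) / nsKer n s p.1 p.2) (Qset n Ω) := by
  refine Integrable.mono' (hue.add hve) ?_ (ae_of_all _ fun p => ?_)
  · have := measurable_nsKer (n := n) (s := s)
    exact Measurable.aestronglyMeasurable (by fun_prop)
  · have h0 := nsKer_nonneg (s := s) p.1 p.2
    rw [Real.norm_eq_abs, abs_div, abs_of_nonneg h0, Pi.add_apply, ← add_div]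
    gcongr
    rw [abs_mul]
    nlinarith [sq_nonneg (|u p.1 - u p.2| - |v p.1 - v p.2|), sq_abs (u p.1 - u p.2),
      sq_abs (v p.1 - v p.2), abs_nonneg (u p.1 - u p.2), abs_nonneg (v p.1 - v p.2)]

lemma FinEnergy.of_le {n : ℕ} {s : ℝ} {Ω : Set (En n)} {u v : En n → ℝ}
    (hv : Measurable v) (hue : FinEnergy n s Ω u)
    (h : ∀ x y, |v x - v y| ≤ |u x - u y|) : FinEnergy n s Ω v := by
  refine Integrable.mono' hue ?_ (ae_of_all _ fun p => ?_)
  · have := measurable_nsKer (n := n) (s := s)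
    exact Measurable.aestronglyMeasurable (by fun_prop)
  · have h0 := nsKer_nonneg (s := s) p.1 p.2
    rw [Real.norm_of_nonneg (by positivity)]
    exact div_le_div_of_nonneg_right (sq_le_sq.2 (h _ _)) h0

lemma FinEnergy.add {n : ℕ} {s : ℝ} {Ω : Set (En n)} {u v : En n → ℝ}
    (hu : Measurable u) (hv : Measurable v) (hue : FinEnergy n s Ω u) (hve : FinEnergy n s Ω v)
    (a b : ℝ) : FinEnergy n s Ω (fun x => a * u x + b * v x) := by
  have h := ((hue.const_mul (a ^ 2)).add
    ((integrableOn_gagliardo hu hv hue hve).const_mul (2 * a * b))).add (hve.const_mul (b ^ 2))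
  refine Integrable.congr h (ae_of_all _ fun p => ?_)
  simp only [Pi.add_apply]
  ring

lemma gagliardo2_add {n : ℕ} {s : ℝ} {Ω : Set (En n)} {u v w : En n → ℝ}
    (hu : Measurable u) (hv : Measurable v) (hw : Measurable w)
    (hue : FinEnergy n s Ω u) (hve : FinEnergy n s Ω v) (hwe : FinEnergy n s Ω w) (a b : ℝ) :
    gagliardo2 n s Ω (fun x => a * u x + b * v x) w
      = a * gagliardo2 n s Ω u w + b * gagliardo2 n s Ω v w := by
  unfold gagliardo2
  rw [← integral_const_mul, ← integral_const_mul, ← integral_add]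
  · refine integral_congr_ae (ae_of_all _ fun p => ?_)
    simp only
    ring
  · exact (integrableOn_gagliardo hu hw hue hwe).const_mul a
  · exact (integrableOn_gagliardo hv hw hve hwe).const_mul b

/-- Truncation of `v` at height `k`. -/
noncomputable def trunc {n : ℕ} (k : ℝ) (v : En n → ℝ) (x : En n) : ℝ :=
  max (-k) (min (v x) k)

lemma measurable_trunc {n : ℕ} {k : ℝ} {v : En n → ℝ} (hv : Measurable v) :
    Measurable (trunc k v) := by
  unfold trunc; fun_prop

lemma abs_trunc_le {n : ℕ} {k : ℝ} (hk : 0 ≤ k) (v : En n → ℝ) (x : En n) :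
    |trunc k v x| ≤ k := by
  unfold trunc
  rw [abs_le]
  exact ⟨le_max_left _ _, max_le (by linarith) (min_le_right _ _)⟩

lemma abs_trunc_le_abs {n : ℕ} {k : ℝ} (hk : 0 ≤ k) (v : En n → ℝ) (x : En n) :
    |trunc k v x| ≤ |v x| := by
  unfold trunc
  rw [abs_le]
  rcases abs_cases (v x) with h | h <;> constructor <;> grind

lemma trunc_eq {n : ℕ} {k : ℝ} {v : En n → ℝ} {x : En n} (h : |v x| ≤ k) :
    trunc k v x = v x := by
  unfold trunc
  rw [abs_le] at h
  rw [min_eq_left h.2, max_eq_right h.1]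

/-- Truncation is monotone and `1`-Lipschitz, so its increments are controlled by those of `v`. -/
lemma sq_trunc_sub_le {n : ℕ} {k : ℝ} (v : En n → ℝ) (x y : En n) :
    (trunc k v x - trunc k v y) ^ 2 ≤ (v x - v y) * (trunc k v x - trunc k v y) := by
  have h1 : ∀ a b : ℝ, a ≤ b → 0 ≤ max (-k) (min b k) - max (-k) (min a k) ∧
      max (-k) (min b k) - max (-k) (min a k) ≤ b - a := by
    intro a b hab
    constructor <;> grind
  unfold trunc
  rcases le_total (v x) (v y) with h | h
  · have := h1 _ _ h; nlinarith
  · have := h1 _ _ h; nlinarith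

lemma abs_trunc_sub_le {n : ℕ} {k : ℝ} (v : En n → ℝ) (x y : En n) :
    |trunc k v x - trunc k v y| ≤ |v x - v y| := by
  have h := sq_trunc_sub_le (k := k) v x y
  by_contra hcon
  push Not at hcon
  have h2 : (v x - v y) * (trunc k v x - trunc k v y)
      ≤ |v x - v y| * |trunc k v x - trunc k v y| := by
    rw [← abs_mul]; exact le_abs_self _
  nlinarith [sq_abs (trunc k v x - trunc k v y), abs_nonneg (v x - v y)]

lemma tendsto_trunc {n : ℕ} (v : En n → ℝ) (x : En n) :
    Tendsto (fun k : ℕ => trunc (k : ℝ) v x) atTop (𝓝 (v x)) := by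
  obtain ⟨N, hN⟩ := exists_nat_ge |v x|
  refine tendsto_const_nhds.congr' ?_
  filter_upwards [eventually_ge_atTop N] with k hk
  exact (trunc_eq (hN.trans (by exact_mod_cast hk))).symm

lemma FinEnergy.trunc {n : ℕ} {s : ℝ} {Ω : Set (En n)} {v : En n → ℝ} {k : ℝ}
    (hv : Measurable v) (h : FinEnergy n s Ω v) : FinEnergy n s Ω (trunc k v) :=
  h.of_le (measurable_trunc hv) (abs_trunc_sub_le v)

lemma integrableOn_of_abs_le {n : ℕ} {Ω : Set (En n)} (hfin : volume Ω ≠ ∞) {v : En n → ℝ}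
    (hv : Measurable v) {k : ℝ} (h : ∀ x, |v x| ≤ k) : IntegrableOn v Ω := by
  have : IsFiniteMeasure (volume.restrict Ω : Measure (En n)) := ⟨by simpa using hfin.lt_top⟩
  exact (integrable_const k).mono' hv.aestronglyMeasurable (ae_of_all _ h)

/-- Bounded functions of finite energy are admissible test functions for every weight `g ∈ L¹`. -/
lemma inHs_of_bounded {n : ℕ} {s : ℝ} {Ω : Set (En n)} (hfin : volume Ω ≠ ∞) {g v : En n → ℝ}
    (hg : IntegrableOn g Ωᶜ) (hv : Measurable v) {k : ℝ} (hk : ∀ x, |v x| ≤ k)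
    (he : FinEnergy n s Ω v) : InHs n s Ω g v := by
  have hsq : ∀ x, v x ^ 2 ≤ k ^ 2 := fun x => sq_le_sq' (abs_le.1 (hk x)).1 (abs_le.1 (hk x)).2
  refine ⟨hv, integrableOn_of_abs_le hfin (hv.pow_const 2) (k := k ^ 2) (fun x => ?_), ?_, he⟩
  · rw [abs_of_nonneg (sq_nonneg _)]; exact hsq x
  · refine Integrable.mono' (hg.norm.mul_const (k ^ 2)) ?_ (ae_of_all _ fun x => ?_)
    · exact hg.norm.aestronglyMeasurable.mul (hv.pow_const 2).aestronglyMeasurable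
    · rw [Real.norm_of_nonneg (by positivity)]
      exact mul_le_mul_of_nonneg_left (hsq x) (abs_nonneg _)

/-! ### The energy space and solvability for data of zero mean -/

lemma exists_nsKer_le {n : ℕ} {s : ℝ} (hs : 0 < s) {Ω : Set (En n)} (hb : IsBounded Ω) :
    ∃ D : ℝ, 0 < D ∧ ∀ x ∈ Ω, ∀ y ∈ Ω, nsKer n s x y ≤ D := by
  obtain ⟨d, hd⟩ := Metric.isBounded_iff.1 hb
  refine ⟨(max d 1) ^ ((n : ℝ) + 2 * s), by positivity, fun x hx y hy => ?_⟩
  exact Real.rpow_le_rpow dist_nonneg ((hd hx hy).trans (le_max_left _ _)) (by positivity)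

lemma prod_subset_Qset {n : ℕ} (Ω : Set (En n)) : Ω ×ˢ Ω ⊆ Qset n Ω := by
  rintro ⟨x, y⟩ ⟨hx, -⟩ h
  exact h.1 hx

lemma volume_prod_restrict {n : ℕ} (A B : Set (En n)) :
    (volume : Measure (En n × En n)).restrict (A ×ˢ B)
      = (volume.restrict A).prod (volume.restrict B) := by
  rw [Measure.volume_eq_prod, Measure.prod_restrict]

/-- On a bounded set, finite energy forces square integrability: the kernel is bounded below on
`Ω × Ω`, so `x ↦ (v x - v y)²` is integrable on `Ω` for some `y`. -/
lemma FinEnergy.integrableOn_sq {n : ℕ} {s : ℝ} (hs : 0 < s) {Ω : Set (En n)} (ho : IsOpen Ω)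
    (hb : IsBounded Ω) (hne : Ω.Nonempty) {v : En n → ℝ} (hv : Measurable v)
    (he : FinEnergy n s Ω v) : IntegrableOn (fun x => v x ^ 2) Ω := by
  obtain ⟨D, hD, hK⟩ := exists_nsKer_le (n := n) hs hb
  have hfin : volume Ω ≠ ∞ := hb.measure_lt_top.ne
  have : IsFiniteMeasure (volume.restrict Ω : Measure (En n)) := ⟨by simpa using hfin.lt_top⟩
  have h1 : IntegrableOn (fun p : En n × En n => (v p.1 - v p.2) ^ 2) (Ω ×ˢ Ω) := by
    refine Integrable.mono' ((he.mono_set (prod_subset_Qset Ω)).const_mul D)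
      (Measurable.aestronglyMeasurable (by fun_prop)) ?_
    filter_upwards [ae_restrict_mem (ho.measurableSet.prod ho.measurableSet)] with p hp
    rw [Real.norm_of_nonneg (sq_nonneg _)]
    by_cases hxy : p.1 = p.2
    · simp [hxy]
    · have h2 := nsKer_pos (s := s) hxy
      rw [mul_div_assoc', le_div_iff₀ h2, mul_comm D]
      exact mul_le_mul_of_nonneg_left (hK _ hp.1 _ hp.2) (sq_nonneg _)
  unfold IntegrableOn at h1
  rw [volume_prod_restrict] at h1
  have hne' : (volume.restrict Ω : Measure (En n)) ≠ 0 := by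
    rw [Ne, Measure.restrict_eq_zero]
    exact (ho.measure_pos volume hne).ne'
  have : NeBot (ae (volume.restrict Ω : Measure (En n))) := ae_neBot.2 hne'
  obtain ⟨y, hy⟩ := h1.prod_left_ae.exists
  refine Integrable.mono' ((hy.const_mul 2).add (integrable_const (2 * v y ^ 2)))
    (hv.pow_const 2).aestronglyMeasurable (ae_of_all _ fun x => ?_)
  rw [Real.norm_of_nonneg (sq_nonneg _)]
  simp only [Pi.add_apply]
  nlinarith [sq_nonneg (v x - 2 * v y)]

/-- The weighted increment `(v x - v y) / |x-y|^{(n+2s)/2}`, whose `L²(Q(Ω))` inner products are the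
Gagliardo form. -/
noncomputable def incr {n : ℕ} (s : ℝ) (v : En n → ℝ) (p : En n × En n) : ℝ :=
  (v p.1 - v p.2) / √(nsKer n s p.1 p.2)

lemma measurable_incr {n : ℕ} {s : ℝ} {v : En n → ℝ} (hv : Measurable v) :
    Measurable (incr s v) := by
  have := measurable_nsKer (n := n) (s := s)
  unfold incr; fun_prop

lemma incr_mul_incr {n : ℕ} {s : ℝ} (u v : En n → ℝ) (p : En n × En n) :
    incr s u p * incr s v p
      = (u p.1 - u p.2) * (v p.1 - v p.2) / nsKer n s p.1 p.2 := by
  unfold incr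
  rw [div_mul_div_comm, Real.mul_self_sqrt (nsKer_nonneg _ _)]

lemma finEnergy_iff_memLp {n : ℕ} {s : ℝ} {Ω : Set (En n)} {v : En n → ℝ} (hv : Measurable v) :
    FinEnergy n s Ω v ↔ MemLp (incr s v) 2 (volume.restrict (Qset n Ω)) := by
  rw [memLp_two_iff_integrable_sq (measurable_incr hv).aestronglyMeasurable]
  have : (fun p => incr s v p ^ 2)
      = fun p : En n × En n => (v p.1 - v p.2) ^ 2 / nsKer n s p.1 p.2 := by
    funext p
    rw [sq, incr_mul_incr, sq]
  rw [this]
  rfl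

/-- The subspace of `L²(Q(Ω))` of weighted increments of functions on `ℝⁿ`. -/
def incrSpace (n : ℕ) (s : ℝ) (Ω : Set (En n)) :
    Submodule ℝ (Lp ℝ 2 (volume.restrict (Qset n Ω) : Measure (En n × En n))) where
  carrier := {W | ∃ v : En n → ℝ, Measurable v ∧ W =ᵐ[volume.restrict (Qset n Ω)] incr s v}
  zero_mem' := by
    refine ⟨fun _ => 0, measurable_const, ?_⟩
    filter_upwards [Lp.coeFn_zero ℝ 2 (volume.restrict (Qset n Ω))] with p hp
    rw [hp]; simp [incr]
  add_mem' := by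
    rintro a b ⟨u, hu, hau⟩ ⟨v, hv, hbv⟩
    refine ⟨fun x => u x + v x, hu.add hv, ?_⟩
    filter_upwards [Lp.coeFn_add a b, hau, hbv] with p h1 h2 h3
    rw [h1, Pi.add_apply, h2, h3]
    simp only [incr]; ring
  smul_mem' := by
    rintro c a ⟨u, hu, hau⟩
    refine ⟨fun x => c * u x, hu.const_mul c, ?_⟩
    filter_upwards [Lp.coeFn_smul c a, hau] with p h1 h2
    rw [h1, Pi.smul_apply, h2]
    simp only [incr, smul_eq_mul]; ring

/-- Completeness of the energy space. Along an a.e. convergent subsequence the increments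
`v_k x₀ - v_k y` from a fixed generic `x₀ ∈ Ω` converge, since `{x₀} × ℝⁿ ⊆ Q(Ω)`; their limit
recovers the limit function up to a constant. -/
lemma isClosed_incrSpace {n : ℕ} {s : ℝ} {Ω : Set (En n)} (ho : IsOpen Ω)
    (hne : Ω.Nonempty) : 
    IsClosed (incrSpace n s Ω :
      Set (Lp ℝ 2 (volume.restrict (Qset n Ω) : Measure (En n × En n)))) := by
  apply IsSeqClosed.isClosed
  intro Wk W hWk hlim
  choose vk hvk hWvk using hWk
  have hmeas : TendstoInMeasure (volume.restrict (Qset n Ω)) (fun k => ⇑(Wk k)) atTop W :=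
    tendstoInMeasure_of_tendsto_Lp hlim
  obtain ⟨ns, -, hns⟩ := hmeas.exists_seq_tendsto_ae
  have hQm : MeasurableSet (Qset n Ω) := measurableSet_Qset ho.measurableSet
  have hall : ∀ᵐ p ∂(volume.restrict (Qset n Ω)),
      Tendsto (fun k => incr s (vk (ns k)) p) atTop (𝓝 (W p)) := by
    filter_upwards [hns, ae_all_iff.2 hWvk] with p h1 h2
    simpa only [h2] using h1
  have hdiff : ∀ᵐ p ∂(volume : Measure (En n × En n)), p ∈ Qset n Ω →
      ∃ l, Tendsto (fun k => vk (ns k) p.1 - vk (ns k) p.2) atTop (𝓝 l) := by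
    rw [ae_restrict_iff' hQm] at hall
    filter_upwards [hall] with p hp hpQ
    refine ⟨_, ((hp hpQ).const_mul (√(nsKer n s p.1 p.2))).congr fun k => ?_⟩
    unfold incr
    by_cases hxy : p.1 = p.2
    · simp [hxy]
    · have := Real.sqrt_pos.2 (nsKer_pos (s := s) hxy)
      field_simp
  obtain ⟨x₀, hx₀, hx₀Ω⟩ : ∃ x₀, (∀ᵐ y, (x₀, y) ∈ Qset n Ω →
      ∃ l, Tendsto (fun k => vk (ns k) x₀ - vk (ns k) y) atTop (𝓝 l)) ∧ x₀ ∈ Ω := by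
    have h1 := Measure.ae_ae_of_ae_prod hdiff
    have hne' : (volume.restrict Ω : Measure (En n)) ≠ 0 := by
      rw [Ne, Measure.restrict_eq_zero]
      exact (ho.measure_pos volume hne).ne'
    have : NeBot (ae (volume.restrict Ω : Measure (En n))) := ae_neBot.2 hne'
    exact ((ae_restrict_of_ae h1).and (ae_restrict_mem ho.measurableSet)).exists
  have hconv : ∀ᵐ y, ∃ l, Tendsto (fun k => vk (ns k) y - vk (ns k) x₀) atTop (𝓝 l) := by
    filter_upwards [hx₀] with y hy
    obtain ⟨l, hl⟩ := hy (fun h => h.1 hx₀Ω)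
    exact ⟨-l, hl.neg.congr fun k => by ring⟩
  obtain ⟨v, hv, hvlim⟩ := measurable_limit_of_tendsto_metrizable_ae
    (fun k => ((hvk (ns k)).sub_const (vk (ns k) x₀)).aemeasurable) hconv
  refine ⟨v, hv, ?_⟩
  have hf : ∀ᵐ p ∂(volume : Measure (En n × En n)),
      Tendsto (fun k => vk (ns k) p.1 - vk (ns k) x₀) atTop (𝓝 (v p.1)) :=
    Measure.quasiMeasurePreserving_fst.ae hvlim
  have hg : ∀ᵐ p ∂(volume : Measure (En n × En n)),
      Tendsto (fun k => vk (ns k) p.2 - vk (ns k) x₀) atTop (𝓝 (v p.2)) :=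
    Measure.quasiMeasurePreserving_snd.ae hvlim
  filter_upwards [hall, ae_restrict_of_ae hf, ae_restrict_of_ae hg] with p h1 h2 h3
  refine tendsto_nhds_unique h1 ?_
  refine ((h2.sub h3).div_const (√(nsKer n s p.1 p.2))).congr fun k => ?_
  unfold incr
  congr 1
  ring

lemma integrableOn_mul_of_sq {n : ℕ} {A : Set (En n)} {f v : En n → ℝ} (hfm : Measurable f)
    (hvm : Measurable v) (hf : IntegrableOn (fun x => f x ^ 2) A)
    (hv : IntegrableOn (fun x => v x ^ 2) A) : IntegrableOn (fun x => f x * v x) A :=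
  MemLp.integrable_mul ((memLp_two_iff_integrable_sq hfm.aestronglyMeasurable).2 hf)
    ((memLp_two_iff_integrable_sq hvm.aestronglyMeasurable).2 hv)

lemma integrableOn_of_sq {n : ℕ} {A : Set (En n)} (hfin : volume A ≠ ∞) {f : En n → ℝ}
    (hfm : Measurable f) (hf : IntegrableOn (fun x => f x ^ 2) A) : IntegrableOn f A := by
  have h1 : IntegrableOn (fun _ : En n => (1 : ℝ) ^ 2) A := by simpa using hfin.lt_top
  simpa using integrableOn_mul_of_sq hfm measurable_const hf h1

/-- Solvability of the homogeneous problem for a datum of zero mean. Because `∫_Ω F = 0`, the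
functional `v ↦ ∫_Ω F v` equals `|Ω|⁻¹ ∫∫_{Ω×Ω} F(x) (v x - v y)`, i.e. an `L²(Q(Ω))` inner product
against the increments of `v`; projecting onto the closed space of increments represents it by the
increments of a function `w`. -/
lemma exists_energy_representative {n : ℕ} {s : ℝ} (hs : 0 < s) {Ω : Set (En n)} (ho : IsOpen Ω)
    (hb : IsBounded Ω) (hne : Ω.Nonempty) {F : En n → ℝ} (hFm : Measurable F)
    (hF : IntegrableOn (fun x => F x ^ 2) Ω) (hF0 : ∫ x in Ω, F x = 0) :
    ∃ w : En n → ℝ, Measurable w ∧ FinEnergy n s Ω w ∧ ∀ v : En n → ℝ, Measurable v →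
      IntegrableOn (fun x => v x ^ 2) Ω → FinEnergy n s Ω v →
      gagliardo2 n s Ω w v = ∫ x in Ω, F x * v x := by
  have hΩm := ho.measurableSet
  have hfin : volume Ω ≠ ∞ := hb.measure_lt_top.ne
  have hfinm : IsFiniteMeasure (volume.restrict Ω : Measure (En n)) :=
    ⟨by simpa using hfin.lt_top⟩
  have hQm : MeasurableSet (Qset n Ω) := measurableSet_Qset hΩm
  have hΩΩ : MeasurableSet (Ω ×ˢ Ω) := hΩm.prod hΩm
  set μ : Measure (En n × En n) := volume.restrict (Qset n Ω) with hμ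
  set vol : ℝ := volume.real Ω with hvol
  have hvol0 : 0 < vol := ENNReal.toReal_pos (ho.measure_pos volume hne).ne' hfin
  obtain ⟨D, hD, hK⟩ := exists_nsKer_le (n := n) hs hb
  let Φ : En n × En n → ℝ :=
    (Ω ×ˢ Ω).indicator fun p => F p.1 * √(nsKer n s p.1 p.2) / vol
  have hKm := measurable_nsKer (n := n) (s := s)
  have hΦm : Measurable Φ := Measurable.indicator (by fun_prop) hΩΩ
  have hΦ : MemLp Φ 2 μ := by
    rw [memLp_two_iff_integrable_sq hΦm.aestronglyMeasurable]
    have h1 : IntegrableOn (fun p : En n × En n => F p.1 ^ 2 * (1 : ℝ)) (Ω ×ˢ Ω) := by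
      unfold IntegrableOn
      rw [volume_prod_restrict]
      exact Integrable.mul_prod hF (integrable_const 1)
    have h2 : Integrable (fun p => (Ω ×ˢ Ω).indicator
        (fun p : En n × En n => D / vol ^ 2 * (F p.1 ^ 2 * (1 : ℝ))) p) μ :=
      (((integrable_indicator_iff hΩΩ).2 (h1.const_mul _)).restrict)
    refine h2.mono' (hΦm.pow_const 2).aestronglyMeasurable (ae_of_all _ fun p => ?_)
    rw [Real.norm_of_nonneg (sq_nonneg _)]
    by_cases hp : p ∈ Ω ×ˢ Ω
    · simp only [Φ, Set.indicator_of_mem hp]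
      rw [div_pow, mul_pow, Real.sq_sqrt (nsKer_nonneg _ _), mul_one, div_mul_eq_mul_div]
      refine div_le_div_of_nonneg_right ?_ (by positivity)
      rw [mul_comm]
      exact mul_le_mul_of_nonneg_right (hK _ hp.1 _ hp.2) (sq_nonneg _)
    · simp [Φ, Set.indicator_of_notMem hp]
  have hcomplete : IsComplete (incrSpace n s Ω : Set (Lp ℝ 2 μ)) :=
    (isClosed_incrSpace ho hne).isComplete
  have : CompleteSpace (incrSpace n s Ω) := completeSpace_coe_iff_isComplete.2 hcomplete
  let ΦL : Lp ℝ 2 μ := hΦ.toLp Φ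
  let W : Lp ℝ 2 μ := (incrSpace n s Ω).starProjection ΦL
  obtain ⟨w, hw, hWw⟩ : W ∈ incrSpace n s Ω := Submodule.starProjection_apply_mem _ _
  have hwe : FinEnergy n s Ω w :=
    (finEnergy_iff_memLp hw).2 ((memLp_congr_ae hWw).1 (Lp.memLp W))
  refine ⟨w, hw, hwe, fun v hv hv2 hve => ?_⟩
  have hvL := (finEnergy_iff_memLp hv).1 hve
  let vL : Lp ℝ 2 μ := hvL.toLp (incr s v)
  have hmem : vL ∈ incrSpace n s Ω := ⟨v, hv, hvL.coeFn_toLp⟩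
  have horth := Submodule.starProjection_inner_eq_zero (K := incrSpace n s Ω) ΦL vL hmem
  rw [inner_sub_left, sub_eq_zero, L2.inner_def, L2.inner_def] at horth
  have hl : gagliardo2 n s Ω w v = ∫ p, Φ p * incr s v p ∂μ := by
    calc gagliardo2 n s Ω w v = ∫ p, inner ℝ (W p) (vL p) ∂μ := by
          unfold gagliardo2
          refine integral_congr_ae ?_
          filter_upwards [hWw, (hvL.coeFn_toLp : vL =ᵐ[μ] incr s v)] with p h1 h2
          rw [h1, h2, ← incr_mul_incr]
          simp [mul_comm]
      _ = ∫ p, inner ℝ (ΦL p) (vL p) ∂μ := horth.symm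
      _ = _ := by
          refine integral_congr_ae ?_
          filter_upwards [(hΦ.coeFn_toLp : ΦL =ᵐ[μ] Φ),
            (hvL.coeFn_toLp : vL =ᵐ[μ] incr s v)] with p h1 h2
          rw [h1, h2]
          simp [mul_comm]
  have hr : ∀ p, Φ p * incr s v p
      = (Ω ×ˢ Ω).indicator (fun p => F p.1 * (v p.1 - v p.2) / vol) p := by
    intro p
    by_cases hp : p ∈ Ω ×ˢ Ω
    · simp only [Φ, Set.indicator_of_mem hp, incr]
      by_cases hxy : p.1 = p.2
      · simp [hxy]
      · have := Real.sqrt_pos.2 (nsKer_pos (s := s) hxy)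
        field_simp
    · simp [Φ, Set.indicator_of_notMem hp]
  have hFi : IntegrableOn F Ω := integrableOn_of_sq hfin hFm hF
  have hvi : IntegrableOn v Ω := integrableOn_of_sq hfin hv hv2
  have hFv := integrableOn_mul_of_sq hFm hv hF hv2
  rw [hl, integral_congr_ae (ae_of_all _ hr), integral_indicator hΩΩ, hμ,
    Measure.restrict_restrict hΩΩ, Set.inter_eq_left.2 (prod_subset_Qset Ω),
    volume_prod_restrict, integral_div]
  have hsplit : ∀ p : En n × En n, F p.1 * (v p.1 - v p.2)
      = (F p.1 * v p.1) * (1 : ℝ) - F p.1 * v p.2 := fun p => by ring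
  simp_rw [hsplit]
  rw [integral_sub (Integrable.mul_prod hFv (integrable_const 1)) (Integrable.mul_prod hFi hvi),
    integral_prod_mul (fun x => F x * v x) (fun _ => (1 : ℝ)), integral_prod_mul F v, hF0]
  simp only [integral_const, smul_eq_mul, mul_one, zero_mul, sub_zero,
    measureReal_restrict_apply MeasurableSet.univ, Set.univ_inter]
  rw [← hvol, mul_div_assoc, div_self hvol0.ne', mul_one]

/-! ### Smoothness bounds and the cut-off kernel -/

/-- Global first- and second-order increment bounds on `Ω` for a bounded `C²` function: Taylor
estimates on a bounded neighbourhood of `Ω` for small increments, boundedness for large ones. -/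
lemma exists_bounds {n : ℕ} {Ω : Set (En n)} (hb : IsBounded Ω) {ψ : En n → ℝ}
    (hψ : ContDiff ℝ 2 ψ) (hψb : ∃ M, ∀ x, |ψ x| ≤ M) :
    ∃ C : ℝ, 0 ≤ C ∧ (∀ x ∈ Ω, ∀ y, |ψ x - ψ y| ≤ C * min 1 (dist x y)) ∧
      ∀ x ∈ Ω, ∀ z, |2 * ψ x - ψ (x + z) - ψ (x - z)| ≤ C * min 1 (‖z‖ ^ 2) := by
  obtain ⟨M, hM⟩ := hψb
  have hM0 : 0 ≤ M := (abs_nonneg _).trans (hM 0)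
  obtain ⟨R, hR⟩ := hb.subset_closedBall (0 : En n)
  have hcomp : IsCompact (Metric.closedBall (0 : En n) (R + 1)) := isCompact_closedBall _ _
  have hconv : Convex ℝ (Metric.closedBall (0 : En n) (R + 1)) := convex_closedBall _ _
  have hd : Differentiable ℝ ψ := hψ.differentiable (by norm_num)
  have hψ1 : ContDiff ℝ 1 (fderiv ℝ ψ) := hψ.fderiv_right (by norm_num)
  have hd1 : Differentiable ℝ (fderiv ℝ ψ) := hψ1.differentiable (by norm_num)
  obtain ⟨C₁, hC₁⟩ := hcomp.exists_bound_of_continuousOn (f := fderiv ℝ ψ)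
    hψ1.continuous.continuousOn
  obtain ⟨C₂, hC₂⟩ := hcomp.exists_bound_of_continuousOn (f := fderiv ℝ (fderiv ℝ ψ))
    (hψ1.continuous_fderiv (by norm_num)).continuousOn
  have hin : ∀ x ∈ Ω, ∀ y, dist x y ≤ 1 → y ∈ Metric.closedBall (0 : En n) (R + 1) := by
    intro x hx y hxy
    have h1 := Metric.mem_closedBall.1 (hR hx)
    rw [Metric.mem_closedBall]
    linarith [dist_triangle y x 0, dist_comm x y]
  have hin0 : ∀ x ∈ Ω, x ∈ Metric.closedBall (0 : En n) (R + 1) :=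
    fun x hx => hin x hx x (by simp)
  refine ⟨|C₁| + 2 * |C₂| + 4 * M, by positivity, ?_, ?_⟩
  · intro x hx y
    rcases le_total (dist x y) 1 with h | h
    · rw [min_eq_right h]
      have h1 := hconv.norm_image_sub_le_of_norm_fderiv_le (𝕜 := ℝ) (fun a _ => hd a)
        (fun a ha => (hC₁ a ha).trans (le_abs_self _)) (hin x hx y h) (hin0 x hx)
      rw [Real.norm_eq_abs, ← dist_eq_norm] at h1
      refine h1.trans (mul_le_mul_of_nonneg_right ?_ dist_nonneg)
      linarith [abs_nonneg C₂]
    · rw [min_eq_left h]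
      have h1 := abs_sub (ψ x) (ψ y)
      linarith [hM x, hM y, abs_nonneg C₁, abs_nonneg C₂]
  · intro x hx z
    rcases le_total ‖z‖ 1 with h | h
    · rw [min_eq_right (by nlinarith [norm_nonneg z])]
      have hsub : Metric.closedBall x ‖z‖ ⊆ Metric.closedBall (0 : En n) (R + 1) := by
        intro a ha
        rw [Metric.mem_closedBall, dist_comm] at ha
        exact hin x hx a (ha.trans h)
      have hlip : ∀ a ∈ Metric.closedBall x ‖z‖,
          ‖fderiv ℝ ψ a - fderiv ℝ ψ x‖ ≤ |C₂| * ‖z‖ := by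
        intro a ha
        refine (hconv.norm_image_sub_le_of_norm_fderiv_le (𝕜 := ℝ) (fun b _ => hd1 b)
          (fun b hb => (hC₂ b hb).trans (le_abs_self _)) (hin0 x hx) (hsub ha)).trans ?_
        rw [Metric.mem_closedBall, dist_eq_norm] at ha
        gcongr
      have hxm : x ∈ Metric.closedBall x ‖z‖ := Metric.mem_closedBall_self (norm_nonneg _)
      have h1 := (convex_closedBall x ‖z‖).norm_image_sub_le_of_norm_fderiv_le'
        (𝕜 := ℝ) (fun a _ => hd a) hlip hxm (y := x + z) (by simp)
      have h2 := (convex_closedBall x ‖z‖).norm_image_sub_le_of_norm_fderiv_le'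
        (𝕜 := ℝ) (fun a _ => hd a) hlip hxm (y := x - z) (by simp)
      have e1 : x + z - x = z := by abel
      have e2 : x - z - x = -z := by abel
      rw [e1, Real.norm_eq_abs] at h1
      rw [e2, norm_neg, map_neg, Real.norm_eq_abs] at h2
      have e3 : 2 * ψ x - ψ (x + z) - ψ (x - z)
          = -(ψ (x + z) - ψ x - fderiv ℝ ψ x z) - (ψ (x - z) - ψ x - -fderiv ℝ ψ x z) := by ring
      have h3 : |2 * ψ x - ψ (x + z) - ψ (x - z)|
          ≤ |C₂| * ‖z‖ * ‖z‖ + |C₂| * ‖z‖ * ‖z‖ := by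
        rw [e3]
        refine (abs_sub _ _).trans ?_
        rw [abs_neg]
        exact add_le_add h1 h2
      nlinarith [sq_nonneg ‖z‖, mul_nonneg (abs_nonneg C₁) (sq_nonneg ‖z‖),
        mul_nonneg hM0 (sq_nonneg ‖z‖)]
    · rw [min_eq_left (by nlinarith)]
      have h1 := abs_sub (2 * ψ x - ψ (x + z)) (ψ (x - z))
      have h2 := abs_sub (2 * ψ x) (ψ (x + z))
      rw [abs_mul, abs_two] at h2
      linarith [hM x, hM (x + z), hM (x - z), abs_nonneg C₁, abs_nonneg C₂]

/-- The kernel `|z|^{-n-2s}` cut off at `|z| < ε`. -/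
noncomputable def cutKer (n : ℕ) (s ε : ℝ) (z : En n) : ℝ :=
  if ε ≤ ‖z‖ then (‖z‖ ^ ((n : ℝ) + 2 * s))⁻¹ else 0

lemma measurable_cutKer {n : ℕ} {s ε : ℝ} : Measurable (cutKer n s ε) := by
  unfold cutKer
  exact Measurable.ite (measurableSet_le measurable_const measurable_norm) (by fun_prop)
    measurable_const

lemma cutKer_nonneg {n : ℕ} {s ε : ℝ} (z : En n) : 0 ≤ cutKer n s ε z := by
  unfold cutKer; split_ifs <;> positivity

lemma cutKer_le {n : ℕ} {s ε : ℝ} (z : En n) :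
    cutKer n s ε z ≤ (‖z‖ ^ ((n : ℝ) + 2 * s))⁻¹ := by
  unfold cutKer; split_ifs
  · exact le_rfl
  · positivity

lemma cutKer_neg {n : ℕ} {s ε : ℝ} (z : En n) : cutKer n s ε (-z) = cutKer n s ε z := by
  simp [cutKer]

lemma cutKer_sub_comm {n : ℕ} {s ε : ℝ} (x y : En n) :
    cutKer n s ε (x - y) = cutKer n s ε (y - x) := by
  rw [← cutKer_neg, neg_sub]

lemma tendsto_cutKer {n : ℕ} {s : ℝ} {z : En n} (hz : z ≠ 0) :
    ∀ᶠ ε in 𝓝[>] (0 : ℝ), cutKer n s ε z = (‖z‖ ^ ((n : ℝ) + 2 * s))⁻¹ := by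
  filter_upwards [Ioc_mem_nhdsGT (norm_pos_iff.2 hz)] with ε hε
  rw [cutKer, if_pos hε.2]

lemma cutKer_mul_min_sq_le {n : ℕ} {s ε : ℝ} (z : En n) :
    min 1 (‖z‖ ^ 2) * cutKer n s ε z ≤ majorant n s z := by
  unfold majorant
  rw [div_eq_mul_inv]
  exact mul_le_mul_of_nonneg_left (cutKer_le z) (by positivity)

lemma cutKer_mul_min_le {n : ℕ} {s ε : ℝ} (hε : 0 < ε) (hε1 : ε ≤ 1) (z : En n) :
    ε * (min 1 ‖z‖ * cutKer n s ε z) ≤ majorant n s z := by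
  unfold cutKer
  split_ifs with h
  · rw [← mul_assoc]
    unfold majorant
    rw [div_eq_mul_inv]
    refine mul_le_mul_of_nonneg_right ?_ (by positivity)
    rcases le_total ‖z‖ 1 with h1 | h1
    · rw [min_eq_right h1, min_eq_right (by nlinarith [norm_nonneg z])]
      nlinarith [norm_nonneg z]
    · rw [min_eq_left h1, min_eq_left (by nlinarith)]
      linarith
  · simpa using majorant_nonneg z

lemma cutKer_le_majorant {n : ℕ} {s ε : ℝ} (hε : 0 < ε) (hε1 : ε ≤ 1) (z : En n) :
    cutKer n s ε z ≤ (ε ^ 2)⁻¹ * majorant n s z := by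
  rw [inv_mul_eq_div, le_div_iff₀ (by positivity)]
  unfold cutKer
  split_ifs with h
  · unfold majorant
    rw [div_eq_mul_inv, mul_comm]
    refine mul_le_mul_of_nonneg_right (le_min ?_ ?_) (by positivity)
    · nlinarith
    · gcongr
  · simpa using majorant_nonneg z

lemma integrable_cutKer {n : ℕ} (hn : 0 < n) {s ε : ℝ} (hs : s ∈ Set.Ioo (0 : ℝ) 1)
    (hε : 0 < ε) (hε1 : ε ≤ 1) : Integrable (cutKer n s ε) := by
  refine Integrable.mono' ((integrable_majorant hn hs).const_mul (ε ^ 2)⁻¹)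
    measurable_cutKer.aestronglyMeasurable (ae_of_all _ fun z => ?_)
  rw [Real.norm_of_nonneg (cutKer_nonneg z)]
  exact cutKer_le_majorant hε hε1 z

lemma integrable_min_mul_cutKer {n : ℕ} (hn : 0 < n) {s ε : ℝ} (hs : s ∈ Set.Ioo (0 : ℝ) 1)
    (hε : 0 < ε) (hε1 : ε ≤ 1) : Integrable (fun z => min 1 ‖z‖ * cutKer n s ε z) := by
  refine Integrable.mono' (integrable_cutKer hn hs hε hε1)
    (Measurable.aestronglyMeasurable ?_) (ae_of_all _ fun z => ?_)
  · have := measurable_cutKer (n := n) (s := s) (ε := ε)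
    fun_prop
  · have h0 := cutKer_nonneg (s := s) (ε := ε) z
    rw [Real.norm_of_nonneg (by positivity)]
    exact mul_le_of_le_one_left h0 (min_le_left _ _)

/-- First moments of the cut-off kernel are `o(1/ε)`. -/
lemma tendsto_eps_mul_integral {n : ℕ} (hn : 0 < n) {s : ℝ} (hs : s ∈ Set.Ioo (0 : ℝ) 1) :
    Tendsto (fun ε : ℝ => ε * ∫ z, min 1 ‖z‖ * cutKer n s ε z) (𝓝[>] 0) (𝓝 0) := by
  have h := tendsto_integral_filter_of_dominated_convergence
    (F := fun (ε : ℝ) z => ε * (min 1 ‖z‖ * cutKer n s ε z)) (f := fun _ => (0 : ℝ))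
    (μ := (volume : Measure (En n))) (l := 𝓝[>] (0 : ℝ)) (majorant n s) ?_ ?_
    (integrable_majorant hn hs) ?_
  · simpa only [integral_const_mul, integral_zero] using h
  · refine Eventually.of_forall fun ε => Measurable.aestronglyMeasurable ?_
    have := measurable_cutKer (n := n) (s := s) (ε := ε)
    fun_prop
  · filter_upwards [Ioc_mem_nhdsGT (zero_lt_one' ℝ)] with ε hε
    refine ae_of_all _ fun z => ?_
    have h0 := cutKer_nonneg (s := s) (ε := ε) z
    have := hε.1
    rw [Real.norm_of_nonneg (by positivity)]
    exact cutKer_mul_min_le hε.1 hε.2 z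
  · refine ae_of_all _ fun z => ?_
    have hid : Tendsto (fun ε : ℝ => ε) (𝓝[>] 0) (𝓝 0) := nhdsWithin_le_nhds
    have hup := hid.mul_const (min 1 ‖z‖ * (‖z‖ ^ ((n : ℝ) + 2 * s))⁻¹)
    rw [zero_mul] at hup
    refine tendsto_of_tendsto_of_tendsto_of_le_of_le' tendsto_const_nhds hup ?_ ?_
    · filter_upwards [self_mem_nhdsWithin] with ε hε
      have h0 := cutKer_nonneg (s := s) (ε := ε) z
      have : 0 < ε := hε
      positivity
    · filter_upwards [self_mem_nhdsWithin] with ε hε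
      have : 0 < ε := hε
      have := cutKer_le (s := s) (ε := ε) z
      gcongr

/-! ### Integration by parts with the cut-off kernel -/

lemma finEnergy_of_bounds {n : ℕ} (hn : 0 < n) {s : ℝ} (hs : s ∈ Set.Ioo (0 : ℝ) 1)
    {Ω : Set (En n)} (hΩm : MeasurableSet Ω) (hfin : volume Ω ≠ ∞) {ψ : En n → ℝ}
    (hψm : Measurable ψ) {C : ℝ}
    (hC₁ : ∀ x ∈ Ω, ∀ y, |ψ x - ψ y| ≤ C * min 1 (dist x y)) : FinEnergy n s Ω ψ := by
  have hKm := measurable_nsKer (n := n) (s := s)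
  have key : ∀ x ∈ Ω, ∀ y, (ψ x - ψ y) ^ 2 / nsKer n s x y ≤ C ^ 2 * majorant n s (x - y) := by
    intro x hx y
    rw [majorant_sub, mul_div_assoc']
    refine div_le_div_of_nonneg_right ?_ (nsKer_nonneg _ _)
    have h1 : (ψ x - ψ y) ^ 2 ≤ (C * min 1 (dist x y)) ^ 2 := by
      rw [← sq_abs]
      exact pow_le_pow_left₀ (abs_nonneg _) (hC₁ x hx y) 2
    rw [mul_pow] at h1
    refine h1.trans (mul_le_mul_of_nonneg_left ?_ (sq_nonneg _))
    have h0 : 0 ≤ min 1 (dist x y) := by positivity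
    refine le_min ?_ ?_
    · exact pow_le_one₀ h0 (min_le_left _ _)
    · exact pow_le_pow_left₀ h0 (min_le_right _ _) 2
  refine integrableOn_Qset_of_le hfin ((integrable_majorant hn hs).const_mul (C ^ 2))
    (by fun_prop) ?_ ?_ hΩm
  · intro x hx y
    rw [abs_of_nonneg (div_nonneg (sq_nonneg _) (nsKer_nonneg _ _))]
    exact key x hx y
  · intro x hx y
    simp only
    rw [abs_of_nonneg (div_nonneg (sq_nonneg _) (nsKer_nonneg _ _)), nsKer_comm,
      ← neg_sub, neg_sq]
    exact key x hx y

/-- Integration by parts with the cut-off kernel, for bounded test functions: every integral is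
absolutely convergent, so only Fubini and the symmetry of `Q(Ω)` are needed. -/
lemma cut_identity {n : ℕ} (hn : 0 < n) {s ε : ℝ} (hs : s ∈ Set.Ioo (0 : ℝ) 1)
    (hε : 0 < ε) (hε1 : ε ≤ 1) {Ω : Set (En n)} (hΩm : MeasurableSet Ω) (hfin : volume Ω ≠ ∞)
    {ψ v : En n → ℝ} (hψm : Measurable ψ) {M : ℝ} (hM : ∀ x, |ψ x| ≤ M)
    (hv : Measurable v) {k : ℝ} (hk : ∀ x, |v x| ≤ k) :
    ∫ p in Qset n Ω, (ψ p.1 - ψ p.2) * (v p.1 - v p.2) * cutKer n s ε (p.1 - p.2)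
      = 2 * ((∫ x in Ω, v x * ∫ y, (ψ x - ψ y) * cutKer n s ε (x - y))
        + ∫ x in Ωᶜ, v x * ∫ y in Ω, (ψ x - ψ y) * cutKer n s ε (x - y)) := by
  have hcm := measurable_cutKer (n := n) (s := s) (ε := ε)
  have hk0 : 0 ≤ k := (abs_nonneg _).trans (hk 0)
  have hM0 : 0 ≤ M := (abs_nonneg _).trans (hM 0)
  let G : En n × En n → ℝ := fun p => v p.1 * ((ψ p.1 - ψ p.2) * cutKer n s ε (p.1 - p.2))
  have hGm : Measurable G := by fun_prop
  have hGle : ∀ x y, |G (x, y)| ≤ k * (2 * M) * cutKer n s ε (x - y) := by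
    intro x y
    have h0 := cutKer_nonneg (s := s) (ε := ε) (x - y)
    have h1 : |ψ x - ψ y| ≤ 2 * M := by
      have := abs_sub (ψ x) (ψ y)
      linarith [hM x, hM y]
    simp only [G]
    rw [abs_mul, abs_mul, abs_of_nonneg h0, ← mul_assoc]
    have := hk x
    gcongr
  have hGi : IntegrableOn G (Qset n Ω) := by
    refine integrableOn_Qset_of_le hfin
      ((integrable_cutKer hn hs hε hε1).const_mul (k * (2 * M))) hGm
      (fun x _ y => hGle x y) (fun x _ y => ?_) hΩm
    rw [cutKer_sub_comm]
    exact hGle y x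
  have hswap := measurePreserving_swap_Qset hΩm
  have hGs : Integrable (fun p => G p.swap) (volume.restrict (Qset n Ω)) :=
    (hswap.integrable_comp hGm.aestronglyMeasurable).2 hGi
  have hGseq : ∫ p in Qset n Ω, G p.swap = ∫ p in Qset n Ω, G p :=
    hswap.integral_comp (MeasurableEquiv.prodComm.measurableEmbedding) G
  have h1 : ∫ p in Qset n Ω, (ψ p.1 - ψ p.2) * (v p.1 - v p.2) * cutKer n s ε (p.1 - p.2)
      = 2 * ∫ p in Qset n Ω, G p := by
    rw [two_mul]
    nth_rewrite 2 [← hGseq]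
    rw [← integral_add hGi hGs]
    refine integral_congr_ae (ae_of_all _ fun p => ?_)
    simp only [G, Prod.fst_swap, Prod.snd_swap]
    rw [cutKer_sub_comm p.2 p.1]
    ring
  rw [h1]
  congr 1
  have hd : Disjoint (Ω ×ˢ (Set.univ : Set (En n))) (Ωᶜ ×ˢ Ω) := by
    rw [Set.disjoint_left]
    rintro p ⟨hp, -⟩ ⟨hp', -⟩
    exact hp' hp
  rw [Qset_eq] at hGi ⊢
  have hi1 := hGi.left_of_union
  have hi2 := hGi.right_of_union
  rw [setIntegral_union hd (hΩm.compl.prod hΩm) hi1 hi2]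
  unfold IntegrableOn at hi1 hi2
  rw [volume_prod_restrict] at hi1 hi2 ⊢
  rw [volume_prod_restrict, integral_prod _ hi1, integral_prod _ hi2, Measure.restrict_univ]
  simp only [G, integral_const_mul]

/-- `½ ∫ (2ψ(x) - ψ(x+z) - ψ(x-z)) |z|^{-n-2s} dz`: the fractional Laplacian of `ψ`, up to the
constant `c_{n,s}`, in the absolutely convergent form obtained by symmetrizing the principal
value. -/
noncomputable def symLap (n : ℕ) (s : ℝ) (ψ : En n → ℝ) (x : En n) : ℝ :=
  1 / 2 * ∫ z, (2 * ψ x - ψ (x + z) - ψ (x - z)) * (‖z‖ ^ ((n : ℝ) + 2 * s))⁻¹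

lemma measurable_symLap {n : ℕ} {s : ℝ} {ψ : En n → ℝ} (hψm : Measurable ψ) :
    Measurable (symLap n s ψ) := by
  unfold symLap
  refine Measurable.const_mul ?_ _
  have h : Measurable (fun p : En n × En n =>
      (2 * ψ p.1 - ψ (p.1 + p.2) - ψ (p.1 - p.2)) * (‖p.2‖ ^ ((n : ℝ) + 2 * s))⁻¹) := by
    fun_prop
  exact (h.stronglyMeasurable.integral_prod_right' (ν := volume)).measurable

lemma abs_symLap_le {n : ℕ} (hn : 0 < n) {s : ℝ} (hs : s ∈ Set.Ioo (0 : ℝ) 1)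
    {ψ : En n → ℝ} {C : ℝ} {x : En n}
    (hC₂ : ∀ z, |2 * ψ x - ψ (x + z) - ψ (x - z)| ≤ C * min 1 (‖z‖ ^ 2)) :
    |symLap n s ψ x| ≤ C * ∫ z, majorant n s z := by
  unfold symLap
  have h1 : ‖∫ z, (2 * ψ x - ψ (x + z) - ψ (x - z)) * (‖z‖ ^ ((n : ℝ) + 2 * s))⁻¹‖
      ≤ ∫ z, C * majorant n s z := by
    refine norm_integral_le_of_norm_le ((integrable_majorant hn hs).const_mul C)
      (ae_of_all _ fun z => ?_)
    have h0 : 0 ≤ (‖z‖ ^ ((n : ℝ) + 2 * s))⁻¹ := by positivity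
    rw [norm_mul, Real.norm_of_nonneg h0, majorant, div_eq_mul_inv, ← mul_assoc]
    exact mul_le_mul_of_nonneg_right (hC₂ z) h0
  rw [integral_const_mul, Real.norm_eq_abs] at h1
  rw [abs_mul, abs_of_pos (by norm_num)]
  linarith [abs_nonneg (∫ z, (2 * ψ x - ψ (x + z) - ψ (x - z)) * (‖z‖ ^ ((n : ℝ) + 2 * s))⁻¹)]

lemma cutLap_eq {n : ℕ} (hn : 0 < n) {s ε : ℝ} (hs : s ∈ Set.Ioo (0 : ℝ) 1)
    (hε : 0 < ε) (hε1 : ε ≤ 1) {ψ : En n → ℝ} (hψm : Measurable ψ) {M : ℝ}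
    (hM : ∀ x, |ψ x| ≤ M) (x : En n) :
    ∫ y, (ψ x - ψ y) * cutKer n s ε (x - y)
      = 1 / 2 * ∫ z, (2 * ψ x - ψ (x + z) - ψ (x - z)) * cutKer n s ε z := by
  have hcm := measurable_cutKer (n := n) (s := s) (ε := ε)
  have hbd : ∀ a : En n → En n, Measurable a →
      Integrable (fun z => (ψ x - ψ (a z)) * cutKer n s ε z) := by
    intro a ha
    refine Integrable.mono' ((integrable_cutKer hn hs hε hε1).const_mul (2 * M))
      (Measurable.aestronglyMeasurable (by fun_prop)) (ae_of_all _ fun z => ?_)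
    rw [norm_mul, Real.norm_of_nonneg (cutKer_nonneg z), Real.norm_eq_abs]
    refine mul_le_mul_of_nonneg_right ?_ (cutKer_nonneg z)
    have := abs_sub (ψ x) (ψ (a z))
    linarith [hM x, hM (a z)]
  have h1 : ∫ y, (ψ x - ψ y) * cutKer n s ε (x - y)
      = ∫ z, (ψ x - ψ (x - z)) * cutKer n s ε z := by
    rw [← integral_sub_left_eq_self (fun z => (ψ x - ψ (x - z)) * cutKer n s ε z) volume x]
    simp
  have h2 : ∫ z, (ψ x - ψ (x + z)) * cutKer n s ε z
      = ∫ z, (ψ x - ψ (x - z)) * cutKer n s ε z := by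
    rw [← integral_neg_eq_self]
    refine integral_congr_ae (ae_of_all _ fun z => ?_)
    simp only [cutKer_neg, ← sub_eq_add_neg]
  have h3 : ∫ z, (2 * ψ x - ψ (x + z) - ψ (x - z)) * cutKer n s ε z
      = (∫ z, (ψ x - ψ (x + z)) * cutKer n s ε z)
        + ∫ z, (ψ x - ψ (x - z)) * cutKer n s ε z := by
    rw [← integral_add (hbd (fun z => x + z) (by fun_prop)) (hbd (fun z => x - z) (by fun_prop))]
    refine integral_congr_ae (ae_of_all _ fun z => ?_)
    simp only
    ring
  rw [h3, h2, h1]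
  ring

lemma abs_cutLap_le {n : ℕ} (hn : 0 < n) {s ε : ℝ} (hs : s ∈ Set.Ioo (0 : ℝ) 1)
    (hε : 0 < ε) (hε1 : ε ≤ 1) {ψ : En n → ℝ} (hψm : Measurable ψ) {M : ℝ}
    (hM : ∀ x, |ψ x| ≤ M) {C : ℝ} (hC : 0 ≤ C) {x : En n}
    (hC₂ : ∀ z, |2 * ψ x - ψ (x + z) - ψ (x - z)| ≤ C * min 1 (‖z‖ ^ 2)) :
    |∫ y, (ψ x - ψ y) * cutKer n s ε (x - y)| ≤ C * ∫ z, majorant n s z := by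
  rw [cutLap_eq hn hs hε hε1 hψm hM]
  have h1 : ‖∫ z, (2 * ψ x - ψ (x + z) - ψ (x - z)) * cutKer n s ε z‖
      ≤ ∫ z, C * majorant n s z := by
    refine norm_integral_le_of_norm_le ((integrable_majorant hn hs).const_mul C)
      (ae_of_all _ fun z => ?_)
    rw [norm_mul, Real.norm_of_nonneg (cutKer_nonneg z)]
    refine (mul_le_mul_of_nonneg_right (hC₂ z) (cutKer_nonneg z)).trans ?_
    rw [mul_assoc]
    exact mul_le_mul_of_nonneg_left (cutKer_mul_min_sq_le z) hC
  rw [integral_const_mul, Real.norm_eq_abs] at h1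
  rw [abs_mul, abs_of_pos (by norm_num)]
  linarith [abs_nonneg (∫ z, (2 * ψ x - ψ (x + z) - ψ (x - z)) * cutKer n s ε z)]

lemma tendsto_cutLap {n : ℕ} (hn : 0 < n) {s : ℝ} (hs : s ∈ Set.Ioo (0 : ℝ) 1)
    {ψ : En n → ℝ} (hψm : Measurable ψ) {M : ℝ}
    (hM : ∀ x, |ψ x| ≤ M) {C : ℝ} (hC : 0 ≤ C) {x : En n}
    (hC₂ : ∀ z, |2 * ψ x - ψ (x + z) - ψ (x - z)| ≤ C * min 1 (‖z‖ ^ 2)) :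
    Tendsto (fun ε => ∫ y, (ψ x - ψ y) * cutKer n s ε (x - y)) (𝓝[>] 0)
      (𝓝 (symLap n s ψ x)) := by
  have hev : ∀ᶠ ε in 𝓝[>] (0 : ℝ),
      1 / 2 * ∫ z, (2 * ψ x - ψ (x + z) - ψ (x - z)) * cutKer n s ε z
        = ∫ y, (ψ x - ψ y) * cutKer n s ε (x - y) := by
    filter_upwards [Ioc_mem_nhdsGT (zero_lt_one' ℝ)] with ε hε
    exact (cutLap_eq hn hs hε.1 hε.2 hψm hM x).symm
  refine Tendsto.congr' hev ?_
  unfold symLap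
  refine Tendsto.const_mul _ ?_
  refine tendsto_integral_filter_of_dominated_convergence (fun z => C * majorant n s z) ?_ ?_
    ((integrable_majorant hn hs).const_mul C) ?_
  · refine Eventually.of_forall fun ε => Measurable.aestronglyMeasurable ?_
    have := measurable_cutKer (n := n) (s := s) (ε := ε)
    fun_prop
  · refine Eventually.of_forall fun ε => ae_of_all _ fun z => ?_
    rw [norm_mul, Real.norm_of_nonneg (cutKer_nonneg z)]
    refine (mul_le_mul_of_nonneg_right (hC₂ z) (cutKer_nonneg z)).trans ?_
    rw [mul_assoc]
    exact mul_le_mul_of_nonneg_left (cutKer_mul_min_sq_le z) hC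
  · refine ae_of_all _ fun z => ?_
    by_cases hz : z = 0
    · have h0 : 2 * ψ x - ψ (x + z) - ψ (x - z) = 0 := by simp [hz]; ring
      simp only [h0, zero_mul]
      exact tendsto_const_nhds
    · refine tendsto_const_nhds.congr' ?_
      filter_upwards [tendsto_cutKer (s := s) hz] with ε hε
      rw [hε]

lemma tendsto_cut_gagliardo {n : ℕ} {s : ℝ} {Ω : Set (En n)} {ψ v : En n → ℝ}
    (hψm : Measurable ψ) (hv : Measurable v) (hψe : FinEnergy n s Ω ψ) (hve : FinEnergy n s Ω v) :
    Tendsto (fun ε => ∫ p in Qset n Ω,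
      (ψ p.1 - ψ p.2) * (v p.1 - v p.2) * cutKer n s ε (p.1 - p.2)) (𝓝[>] 0)
      (𝓝 (gagliardo2 n s Ω ψ v)) := by
  have hker : ∀ p : En n × En n, (‖p.1 - p.2‖ ^ ((n : ℝ) + 2 * s))⁻¹ = (nsKer n s p.1 p.2)⁻¹ := by
    intro p; rw [nsKer, dist_eq_norm]
  refine tendsto_integral_filter_of_dominated_convergence _ ?_ ?_
    (integrableOn_gagliardo hψm hv hψe hve).norm ?_
  · refine Eventually.of_forall fun ε => Measurable.aestronglyMeasurable ?_
    have := measurable_cutKer (n := n) (s := s) (ε := ε)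
    fun_prop
  · refine Eventually.of_forall fun ε => ae_of_all _ fun p => ?_
    rw [div_eq_mul_inv, norm_mul, norm_mul _ (nsKer n s p.1 p.2)⁻¹,
      Real.norm_of_nonneg (cutKer_nonneg _),
      Real.norm_of_nonneg (inv_nonneg.2 (nsKer_nonneg _ _)), ← hker]
    exact mul_le_mul_of_nonneg_left (cutKer_le _) (norm_nonneg _)
  · refine ae_of_all _ fun p => ?_
    by_cases hp : p.1 = p.2
    · simp [hp]
    · refine tendsto_const_nhds.congr' ?_
      filter_upwards [tendsto_cutKer (s := s) (sub_ne_zero.2 hp)] with ε hε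
      rw [hε, hker, div_eq_mul_inv]

/-! ### The exterior limit -/

/-- The exterior boundary layer of width `ε`. -/
def layer {n : ℕ} (Ω : Set (En n)) (ε : ℝ) : Set (En n) := Metric.thickening ε Ω \ Ω

/-- Outside the layer of width `ε` the cut-off does not see `Ω`, so the truncated normal derivative
is the true one. -/
lemma cutNormal_eq {n : ℕ} {s ε : ℝ} (hs : s ∈ Set.Ioo (0 : ℝ) 1) (hε : 0 < ε)
    {Ω : Set (En n)} (hΩm : MeasurableSet Ω) {ψ g : En n → ℝ}
    (hψg : ∀ x ∉ closure Ω, NsD n s Ω ψ x = g x) {x : En n} (hx : x ∈ Ωᶜ) (hxl : x ∉ layer Ω ε) :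
    ∫ y in Ω, (ψ x - ψ y) * cutKer n s ε (x - y) = (cns n s)⁻¹ * g x := by
  have hxt : x ∉ Metric.thickening ε Ω := fun h => hxl ⟨h, hx⟩
  have hxc : x ∉ closure Ω := fun h => hxt (Metric.closure_subset_thickening hε Ω h)
  rw [← hψg x hxc, NsD, inv_mul_cancel_left₀ (cns_pos hs).ne']
  refine setIntegral_congr_fun hΩm fun y hy => ?_
  have hd : ε ≤ ‖x - y‖ := by
    rw [← dist_eq_norm]
    by_contra! h
    exact hxt (Metric.mem_thickening_iff.2 ⟨y, hy, h⟩)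
  simp only [cutKer, if_pos hd, nsKer, dist_eq_norm, div_eq_mul_inv]

lemma abs_cutNormal_le {n : ℕ} (hn : 0 < n) {s ε : ℝ} (hs : s ∈ Set.Ioo (0 : ℝ) 1)
    (hε : 0 < ε) (hε1 : ε ≤ 1) {Ω : Set (En n)} (hΩm : MeasurableSet Ω) {ψ : En n → ℝ} {C : ℝ}
    (hC : 0 ≤ C) (hC₁ : ∀ x ∈ Ω, ∀ y, |ψ x - ψ y| ≤ C * min 1 (dist x y)) (x : En n) :
    |∫ y in Ω, (ψ x - ψ y) * cutKer n s ε (x - y)|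
      ≤ C * ∫ z, min 1 ‖z‖ * cutKer n s ε z := by
  have hi := (integrable_min_mul_cutKer hn hs hε hε1).const_mul C
  have hix := hi.comp_sub_left x
  have h1 : ‖∫ y in Ω, (ψ x - ψ y) * cutKer n s ε (x - y)‖
      ≤ ∫ y in Ω, C * (min 1 ‖x - y‖ * cutKer n s ε (x - y)) := by
    refine norm_integral_le_of_norm_le hix.integrableOn ?_
    filter_upwards [ae_restrict_mem hΩm] with y hy
    rw [norm_mul, Real.norm_of_nonneg (cutKer_nonneg _), ← mul_assoc, Real.norm_eq_abs,
      abs_sub_comm]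
    have := hC₁ y hy x
    rw [dist_comm, dist_eq_norm] at this
    exact mul_le_mul_of_nonneg_right this (cutKer_nonneg _)
  refine h1.trans ?_
  refine (setIntegral_le_integral hix (ae_of_all _ fun y => ?_)).trans ?_
  · have := cutKer_nonneg (s := s) (ε := ε) (x - y)
    simp only [Pi.zero_apply]
    positivity
  · rw [integral_sub_left_eq_self (fun z => C * (min 1 ‖z‖ * cutKer n s ε z)) volume x,
      integral_const_mul]

/-- The exterior contribution converges to the pairing with the Neumann datum. The layer of width
`ε` has measure `O(ε)` and the truncated normal derivative is `o(1/ε)` there. -/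
lemma tendsto_cut_exterior {n : ℕ} (hn : 0 < n) {s : ℝ} (hs : s ∈ Set.Ioo (0 : ℝ) 1)
    {Ω : Set (En n)} (hΩ : IsLipschitzDomain n Ω) {ψ g v : En n → ℝ} (hψm : Measurable ψ)
    (hgm : Measurable g) (hg : IntegrableOn g Ωᶜ)
    (hψg : ∀ x ∉ closure Ω, NsD n s Ω ψ x = g x) {C : ℝ} (hC : 0 ≤ C)
    (hC₁ : ∀ x ∈ Ω, ∀ y, |ψ x - ψ y| ≤ C * min 1 (dist x y))
    (hv : Measurable v) {k : ℝ} (hk : ∀ x, |v x| ≤ k) :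
    Tendsto (fun ε => ∫ x in Ωᶜ, v x * ∫ y in Ω, (ψ x - ψ y) * cutKer n s ε (x - y)) (𝓝[>] 0)
      (𝓝 ((cns n s)⁻¹ * ∫ x in Ωᶜ, g x * v x)) := by
  have hΩm := hΩ.1.measurableSet
  have hk0 : 0 ≤ k := (abs_nonneg _).trans (hk 0)
  obtain ⟨C', hC', ε₀, hε₀, hvol⟩ := volume_layer_le hn hΩ
  have hfr := volume_frontier_eq_zero hn hΩ
  let I : ℝ → En n → ℝ := fun ε x => v x * ∫ y in Ω, (ψ x - ψ y) * cutKer n s ε (x - y)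
  let J : ℝ → ℝ := fun ε => ∫ z : En n, min 1 ‖z‖ * cutKer n s ε z
  have hIm : ∀ ε, Measurable (I ε) := by
    intro ε
    refine hv.mul ?_
    have hcm := measurable_cutKer (n := n) (s := s) (ε := ε)
    have h : Measurable (fun p : En n × En n => (ψ p.1 - ψ p.2) * cutKer n s ε (p.1 - p.2)) := by
      fun_prop
    exact (h.stronglyMeasurable.integral_prod_right' (ν := volume.restrict Ω)).measurable
  have hgv : IntegrableOn (fun x => (cns n s)⁻¹ * (g x * v x)) Ωᶜ := by
    refine Integrable.const_mul ?_ _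
    refine Integrable.mono' (hg.norm.mul_const k) (hgm.mul hv).aestronglyMeasurable
      (ae_of_all _ fun x => ?_)
    rw [norm_mul]
    exact mul_le_mul_of_nonneg_left (hk x) (norm_nonneg _)
  have hSm : ∀ ε, MeasurableSet (layer Ω ε) := fun ε =>
    Metric.isOpen_thickening.measurableSet.diff hΩm
  have hev : ∀ᶠ ε in 𝓝[>] (0 : ℝ), 0 < ε ∧ ε ≤ 1 ∧ ε ≤ ε₀ := by
    filter_upwards [Ioc_mem_nhdsGT (zero_lt_one' ℝ), Ioc_mem_nhdsGT hε₀] with ε h1 h2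
    exact ⟨h1.1, h1.2, h2.2⟩
  have hIb : ∀ ε, 0 < ε → ε ≤ 1 → ∀ x, ‖I ε x‖ ≤ k * (C * J ε) := by
    intro ε hε hε1 x
    simp only [I, J, Real.norm_eq_abs, abs_mul]
    exact mul_le_mul (hk x) (abs_cutNormal_le hn hs hε hε1 hΩm hC hC₁ x) (abs_nonneg _) hk0
  -- on the layer, `|I ε| ≤ k C J(ε)` with `ε J(ε) → 0`, and the layer has measure `O(ε)`
  have hlim1 : Tendsto (fun ε => ∫ x in layer Ω ε, I ε x) (𝓝[>] 0) (𝓝 0) := by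
    have h0 := (tendsto_eps_mul_integral hn hs).const_mul (k * C * C')
    rw [mul_zero] at h0
    refine squeeze_zero_norm' ?_ h0
    filter_upwards [hev] with ε ⟨hε, hε1, hε2⟩
    have hv' := hvol ε hε hε2
    have hJ : 0 ≤ J ε := integral_nonneg fun z => mul_nonneg (by positivity) (cutKer_nonneg z)
    have h1 := norm_setIntegral_le_of_norm_le_const (μ := volume) (s := layer Ω ε)
      (hv'.trans_lt ENNReal.ofReal_lt_top) (fun x _ => hIb ε hε hε1 x)
    refine h1.trans ?_
    have h2 : volume.real (layer Ω ε) ≤ C' * ε :=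
      ENNReal.toReal_le_of_le_ofReal (by positivity) hv'
    calc k * (C * J ε) * volume.real (layer Ω ε) ≤ k * (C * J ε) * (C' * ε) :=
          mul_le_mul_of_nonneg_left h2 (by positivity)
      _ = k * C * C' * (ε * J ε) := by ring
  -- `∂Ω` is null, so almost every exterior point eventually leaves the layer
  have hlim2 : Tendsto (fun ε => ∫ x in Ωᶜ, (layer Ω ε)ᶜ.indicator
      (fun x => (cns n s)⁻¹ * (g x * v x)) x) (𝓝[>] 0)
      (𝓝 (∫ x in Ωᶜ, (cns n s)⁻¹ * (g x * v x))) := by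
    refine tendsto_integral_filter_of_dominated_convergence _ ?_ ?_ hgv.norm ?_
    · refine Eventually.of_forall fun ε => Measurable.aestronglyMeasurable ?_
      exact Measurable.indicator (by fun_prop) (hSm ε).compl
    · exact Eventually.of_forall fun ε => ae_of_all _ fun x => norm_indicator_le_norm_self _ _
    · have hfr' : ∀ᵐ x ∂(volume.restrict Ωᶜ), x ∉ frontier Ω :=
        ae_restrict_of_ae (measure_eq_zero_iff_ae_notMem.1 hfr)
      filter_upwards [hfr', ae_restrict_mem hΩm.compl] with x hx hxc
      have hxcl : x ∉ closure Ω := by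
        intro h
        exact hx ⟨h, by rwa [hΩ.1.interior_eq]⟩
      refine tendsto_const_nhds.congr' ?_
      have hpos : 0 < Metric.infDist x Ω :=
        (Metric.infDist_pos_iff_notMem_closure hΩ.2.2.1).1 hxcl
      filter_upwards [Ioc_mem_nhdsGT hpos] with ε hε
      rw [Set.indicator_of_mem]
      rintro ⟨h, -⟩
      obtain ⟨y, hy, hxy⟩ := Metric.mem_thickening_iff.1 h
      linarith [Metric.infDist_le_dist_of_mem (x := x) hy, hε.2]
  have hsum := hlim1.add hlim2
  rw [zero_add, integral_const_mul] at hsum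
  refine hsum.congr' ?_
  filter_upwards [hev] with ε ⟨hε, hε1, hε2⟩
  have hSfin : volume (layer Ω ε) < ∞ := (hvol ε hε hε2).trans_lt ENNReal.ofReal_lt_top
  have hIi : IntegrableOn (I ε) (layer Ω ε) :=
    Measure.integrableOn_of_bounded hSfin.ne (hIm ε).aestronglyMeasurable
      (ae_of_all _ fun x => hIb ε hε hε1 x)
  have hsub : layer Ω ε ⊆ Ωᶜ := fun x hx => hx.2
  have e1 : ∫ x in layer Ω ε, I ε x = ∫ x in Ωᶜ, (layer Ω ε).indicator (I ε) x := by
    rw [setIntegral_indicator (hSm ε), Set.inter_eq_right.2 hsub]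
  rw [e1, ← integral_add]
  · refine setIntegral_congr_fun hΩm.compl fun x hx => ?_
    by_cases hxl : x ∈ layer Ω ε
    · simp [hxl, I]
    · simp only [Set.indicator_of_notMem hxl, Set.indicator_of_mem (Set.mem_compl hxl), zero_add]
      rw [cutNormal_eq hs hε hΩm hψg hx hxl]
      ring
  · exact (hIi.integrable_indicator (hSm ε)).integrableOn
  · exact hgv.indicator (hSm ε).compl

/-! ### The integration by parts formula and uniqueness -/

lemma integration_by_parts_bounded {n : ℕ} (hn : 0 < n) {s : ℝ} (hs : s ∈ Set.Ioo (0 : ℝ) 1)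
    {Ω : Set (En n)} (hΩ : IsLipschitzDomain n Ω) {ψ g v : En n → ℝ} (hψm : Measurable ψ)
    {M : ℝ} (hM : ∀ x, |ψ x| ≤ M) (hgm : Measurable g) (hg : IntegrableOn g Ωᶜ)
    (hψg : ∀ x ∉ closure Ω, NsD n s Ω ψ x = g x) {C : ℝ} (hC : 0 ≤ C)
    (hC₁ : ∀ x ∈ Ω, ∀ y, |ψ x - ψ y| ≤ C * min 1 (dist x y))
    (hC₂ : ∀ x ∈ Ω, ∀ z, |2 * ψ x - ψ (x + z) - ψ (x - z)| ≤ C * min 1 (‖z‖ ^ 2))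
    (hv : Measurable v) {k : ℝ} (hk : ∀ x, |v x| ≤ k) (hve : FinEnergy n s Ω v) :
    cns n s / 2 * gagliardo2 n s Ω ψ v
      = (∫ x in Ω, cns n s * symLap n s ψ x * v x) + ∫ x in Ωᶜ, g x * v x := by
  have hΩm := hΩ.1.measurableSet
  have hfin : volume Ω ≠ ∞ := hΩ.2.1.measure_lt_top.ne
  have hk0 : 0 ≤ k := (abs_nonneg _).trans (hk 0)
  have hψe := finEnergy_of_bounds hn hs hΩm hfin hψm hC₁
  have hlimQ := tendsto_cut_gagliardo hψm hv hψe hve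
  have hlimE := tendsto_cut_exterior hn hs hΩ hψm hgm hg hψg hC hC₁ hv hk
  have hlimI : Tendsto (fun ε => ∫ x in Ω, v x * ∫ y, (ψ x - ψ y) * cutKer n s ε (x - y))
      (𝓝[>] 0) (𝓝 (∫ x in Ω, v x * symLap n s ψ x)) := by
    refine tendsto_integral_filter_of_dominated_convergence
      (fun _ => k * (C * ∫ z : En n, majorant n s z)) ?_ ?_ ?_ ?_
    · refine Eventually.of_forall fun ε => Measurable.aestronglyMeasurable (hv.mul ?_)
      have hcm := measurable_cutKer (n := n) (s := s) (ε := ε)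
      have h : Measurable (fun p : En n × En n =>
          (ψ p.1 - ψ p.2) * cutKer n s ε (p.1 - p.2)) := by fun_prop
      exact (h.stronglyMeasurable.integral_prod_right' (ν := volume)).measurable
    · filter_upwards [Ioc_mem_nhdsGT (zero_lt_one' ℝ)] with ε hε
      filter_upwards [ae_restrict_mem hΩm] with x hx
      rw [norm_mul]
      exact mul_le_mul (hk x) (abs_cutLap_le hn hs hε.1 hε.2 hψm hM hC (hC₂ x hx))
        (norm_nonneg _) hk0
    · exact integrableOn_const hfin
    · filter_upwards [ae_restrict_mem hΩm] with x hx
      exact (tendsto_cutLap hn hs hψm hM hC (hC₂ x hx)).const_mul _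
  have hlim := (hlimI.add hlimE).const_mul 2
  have heq := tendsto_nhds_unique_of_eventuallyEq hlimQ hlim (by
    filter_upwards [Ioc_mem_nhdsGT (zero_lt_one' ℝ)] with ε hε
    exact cut_identity hn hs hε.1 hε.2 hΩm hfin hψm hM hv hk)
  have hc := (cns_pos (n := n) hs).ne'
  have e : ∫ x in Ω, cns n s * symLap n s ψ x * v x
      = cns n s * ∫ x in Ω, v x * symLap n s ψ x := by
    rw [← integral_const_mul]
    refine integral_congr_ae (ae_of_all _ fun x => ?_)
    simp only
    ring
  rw [heq, e]
  field_simp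

/-- The integration by parts formula for `ψ`, tested against the whole of `H^s_{Ω,g}`; it follows
from the bounded case by truncating the test function. -/
lemma integration_by_parts {n : ℕ} (hn : 0 < n) {s : ℝ} (hs : s ∈ Set.Ioo (0 : ℝ) 1)
    {Ω : Set (En n)} (hΩ : IsLipschitzDomain n Ω) {ψ g v : En n → ℝ} (hψm : Measurable ψ)
    {M : ℝ} (hM : ∀ x, |ψ x| ≤ M) (hgm : Measurable g) (hg : IntegrableOn g Ωᶜ)
    (hψg : ∀ x ∉ closure Ω, NsD n s Ω ψ x = g x) {C : ℝ} (hC : 0 ≤ C)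
    (hC₁ : ∀ x ∈ Ω, ∀ y, |ψ x - ψ y| ≤ C * min 1 (dist x y))
    (hC₂ : ∀ x ∈ Ω, ∀ z, |2 * ψ x - ψ (x + z) - ψ (x - z)| ≤ C * min 1 (‖z‖ ^ 2))
    (hv : InHs n s Ω g v) :
    cns n s / 2 * gagliardo2 n s Ω ψ v
      = (∫ x in Ω, cns n s * symLap n s ψ x * v x) + ∫ x in Ωᶜ, g x * v x := by
  obtain ⟨hvm, hv2, hvg, hve⟩ := hv
  have hΩm := hΩ.1.measurableSet
  have hfin : volume Ω ≠ ∞ := hΩ.2.1.measure_lt_top.ne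
  have hψe := finEnergy_of_bounds hn hs hΩm hfin hψm hC₁
  have hHm : Measurable (fun x => cns n s * symLap n s ψ x) :=
    (measurable_symLap hψm).const_mul _
  have hKm := measurable_nsKer (n := n) (s := s)
  have htm : ∀ k : ℕ, Measurable (trunc (k : ℝ) v) := fun k => measurable_trunc hvm
  have hQ : Tendsto (fun k : ℕ => gagliardo2 n s Ω ψ (trunc (k : ℝ) v)) atTop
      (𝓝 (gagliardo2 n s Ω ψ v)) := by
    refine tendsto_integral_of_dominated_convergence _ (fun k => ?_)
      (integrableOn_gagliardo hψm hvm hψe hve).norm (fun k => ae_of_all _ fun p => ?_)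
      (ae_of_all _ fun p => ?_)
    · have := htm k
      exact Measurable.aestronglyMeasurable (by fun_prop)
    · rw [norm_div, norm_div, norm_mul, norm_mul]
      have h1 := abs_trunc_sub_le (k := (k : ℝ)) v p.1 p.2
      simp only [Real.norm_eq_abs]
      gcongr
    · exact (((tendsto_trunc v p.1).sub (tendsto_trunc v p.2)).const_mul _).div_const _
  have hI : Tendsto (fun k : ℕ => ∫ x in Ω, cns n s * symLap n s ψ x * trunc (k : ℝ) v x) atTop
      (𝓝 (∫ x in Ω, cns n s * symLap n s ψ x * v x)) := by
    have hv1 := integrableOn_of_sq hfin hvm hv2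
    refine tendsto_integral_of_dominated_convergence
      (fun x => cns n s * (C * ∫ z : En n, majorant n s z) * |v x|)
      (fun k => (hHm.mul (htm k)).aestronglyMeasurable)
      (hv1.norm.const_mul _) (fun k => ?_)
      (ae_of_all _ fun x => (tendsto_trunc v x).const_mul _)
    filter_upwards [ae_restrict_mem hΩm] with x hx
    have hc := (cns_pos (n := n) hs).le
    have h1 := abs_symLap_le hn hs (hC₂ x hx)
    have h2 := abs_trunc_le_abs (Nat.cast_nonneg k) v x
    rw [norm_mul, norm_mul, Real.norm_of_nonneg hc]
    simp only [Real.norm_eq_abs]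
    have h3 : 0 ≤ C * ∫ z : En n, majorant n s z := (abs_nonneg _).trans h1
    gcongr
  have hE : Tendsto (fun k : ℕ => ∫ x in Ωᶜ, g x * trunc (k : ℝ) v x) atTop
      (𝓝 (∫ x in Ωᶜ, g x * v x)) := by
    refine tendsto_integral_of_dominated_convergence
      (fun x => |g x| + |g x| * v x ^ 2)
      (fun k => (hgm.mul (htm k)).aestronglyMeasurable)
      (hg.norm.add hvg) (fun k => ae_of_all _ fun x => ?_)
      (ae_of_all _ fun x => (tendsto_trunc v x).const_mul _)
    have h2 := abs_trunc_le_abs (Nat.cast_nonneg k) v x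
    rw [norm_mul, Real.norm_eq_abs, Real.norm_eq_abs, ← mul_one_add]
    refine mul_le_mul_of_nonneg_left (h2.trans ?_) (abs_nonneg _)
    nlinarith [sq_nonneg (|v x| - 1), sq_abs (v x)]
  refine tendsto_nhds_unique (hQ.const_mul (cns n s / 2)) ((hI.add hE).congr fun k => ?_)
  exact (integration_by_parts_bounded hn hs hΩ hψm hM hgm hg hψg hC hC₁ hC₂ (htm k)
    (abs_trunc_le (Nat.cast_nonneg k) v) (FinEnergy.trunc hvm hve)).symm

lemma finEnergy_one {n : ℕ} {s : ℝ} {Ω : Set (En n)} : FinEnergy n s Ω (fun _ => 1) := by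
  simp [FinEnergy]

lemma gagliardo2_one {n : ℕ} {s : ℝ} {Ω : Set (En n)} (u : En n → ℝ) :
    gagliardo2 n s Ω u (fun _ => 1) = 0 := by
  simp [gagliardo2]

lemma inHs_one {n : ℕ} {s : ℝ} {Ω : Set (En n)} (hfin : volume Ω ≠ ∞) {g : En n → ℝ}
    (hg : IntegrableOn g Ωᶜ) : InHs n s Ω g (fun _ => 1) :=
  inHs_of_bounded hfin hg measurable_const (k := 1) (by simp) finEnergy_one

/-- A function of finite energy that is orthogonal to its own truncations is constant: the energy
of each truncation vanishes, so `w x = w y` for almost every `(x, y) ∈ Q(Ω)`. -/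
lemma ae_const_of_orthogonal {n : ℕ} {s : ℝ} {Ω : Set (En n)} (ho : IsOpen Ω) (hne : Ω.Nonempty)
    {w : En n → ℝ} (hw : Measurable w) (hwe : FinEnergy n s Ω w)
    (h0 : ∀ k : ℕ, gagliardo2 n s Ω w (trunc (k : ℝ) w) = 0) :
    ∃ c : ℝ, w =ᵐ[volume] fun _ => c := by
  have hΩm := ho.measurableSet
  have h1 : ∀ k : ℕ, ∀ᵐ p ∂(volume.restrict (Qset n Ω)),
      trunc (k : ℝ) w p.1 = trunc (k : ℝ) w p.2 := by
    intro k
    have hi := integrableOn_gagliardo hw (measurable_trunc (k := (k : ℝ)) hw) hwe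
      (FinEnergy.trunc hw hwe)
    have hnn : ∀ p : En n × En n, 0 ≤ (w p.1 - w p.2) *
        (trunc (k : ℝ) w p.1 - trunc (k : ℝ) w p.2) / nsKer n s p.1 p.2 := fun p =>
      div_nonneg ((sq_nonneg _).trans (sq_trunc_sub_le w p.1 p.2)) (nsKer_nonneg _ _)
    have hz := (integral_eq_zero_iff_of_nonneg hnn hi).1 (h0 k)
    filter_upwards [hz] with p hp
    by_cases hpp : p.1 = p.2
    · rw [hpp]
    have hK := nsKer_pos (s := s) hpp
    have h3 : (w p.1 - w p.2) * (trunc (k : ℝ) w p.1 - trunc (k : ℝ) w p.2) = 0 := by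
      simp only [Pi.zero_apply, div_eq_zero_iff, hK.ne', or_false] at hp
      exact hp
    have h2 := sq_trunc_sub_le (k := (k : ℝ)) w p.1 p.2
    rw [h3] at h2
    exact sub_eq_zero.1 (pow_eq_zero_iff two_ne_zero |>.1 (le_antisymm h2 (sq_nonneg _)))
  have h2 : ∀ᵐ p ∂(volume.restrict (Qset n Ω)), w p.1 = w p.2 := by
    filter_upwards [ae_all_iff.2 h1] with p hp
    exact tendsto_nhds_unique (tendsto_trunc w p.1)
      ((tendsto_trunc w p.2).congr fun k => (hp k).symm)
  have h3 : ∀ᵐ p ∂((volume.restrict Ω).prod (volume : Measure (En n))), w p.1 = w p.2 := by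
    have h4 : Ω ×ˢ (Set.univ : Set (En n)) ⊆ Qset n Ω := by
      rw [Qset_eq]; exact Set.subset_union_left
    have h5 := ae_restrict_of_ae_restrict_of_subset h4 h2
    rwa [volume_prod_restrict, Measure.restrict_univ] at h5
  have h6 := Measure.ae_ae_of_ae_prod h3
  have hnz : (volume.restrict Ω : Measure (En n)) ≠ 0 := by
    rw [Ne, Measure.restrict_eq_zero]
    exact (ho.measure_pos volume hne).ne'
  have : (ae (volume.restrict Ω : Measure (En n))).NeBot := ae_neBot.2 hnz
  obtain ⟨x, hx⟩ := h6.exists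
  exact ⟨w x, hx.mono fun y hy => hy.symm⟩

-- STATEMENT 5
theorem neumann_existence_uniqueness (n : ℕ) (hn : 0 < n) (s : ℝ) (hs : s ∈ Set.Ioo (0 : ℝ) 1)
    (Ω : Set (En n)) (hΩ : IsLipschitzDomain n Ω)
    (f g : En n → ℝ) (hfm : Measurable f) (hf : IntegrableOn (fun x => f x ^ 2) Ω)
    (hgm : Measurable g) (hg : IntegrableOn g Ωᶜ)
    (ψ : En n → ℝ) (hψ : ContDiff ℝ 2 ψ) (hψb : ∃ M, ∀ x, |ψ x| ≤ M)
    (hψg : ∀ x ∉ closure Ω, NsD n s Ω ψ x = g x) :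
    ((∃ u : En n → ℝ, IsWeakSol n s Ω f g u) ↔ (∫ x in Ω, f x) = -∫ x in Ωᶜ, g x) ∧
    ((∫ x in Ω, f x) = -(∫ x in Ωᶜ, g x) →
      ∀ u₁ u₂ : En n → ℝ, IsWeakSol n s Ω f g u₁ → IsWeakSol n s Ω f g u₂ →
        ∃ c : ℝ, (fun x => u₁ x - u₂ x) =ᵐ[volume] fun _ => c) := by
  have hΩm := hΩ.1.measurableSet
  have hfin : volume Ω ≠ ∞ := hΩ.2.1.measure_lt_top.ne
  have hψm : Measurable ψ := hψ.continuous.measurable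
  obtain ⟨C, hC, hC₁, hC₂⟩ := exists_bounds hΩ.2.1 hψ hψb
  obtain ⟨M, hM⟩ := hψb
  have hψe := finEnergy_of_bounds hn hs hΩm hfin hψm hC₁
  have hc := cns_pos (n := n) hs
  refine ⟨⟨?_, ?_⟩, ?_⟩
  · rintro ⟨u, -, hu⟩
    have h := hu _ (inHs_one hfin hg)
    rw [gagliardo2_one] at h
    simp only [mul_one, mul_zero] at h
    linarith
  · intro hcomp
    -- `H` is `(-Δ)^s ψ`; the function `u - ψ` solves the problem with data `f - H` and `0`
    let H : En n → ℝ := fun x => cns n s * symLap n s ψ x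
    have hHm : Measurable H := (measurable_symLap hψm).const_mul _
    have hparts := fun v (hv : InHs n s Ω g v) =>
      integration_by_parts hn hs hΩ hψm hM hgm hg hψg hC hC₁ hC₂ hv
    have hH2 : IntegrableOn (fun x => H x ^ 2) Ω := by
      refine Measure.integrableOn_of_bounded hfin (hHm.pow_const 2).aestronglyMeasurable
        (M := (cns n s * (C * ∫ z : En n, majorant n s z)) ^ 2) ?_
      filter_upwards [ae_restrict_mem hΩm] with x hx
      rw [norm_pow]
      refine pow_le_pow_left₀ (norm_nonneg _) ?_ 2
      rw [norm_mul, Real.norm_of_nonneg hc.le]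
      exact mul_le_mul_of_nonneg_left (abs_symLap_le hn hs (hC₂ x hx)) hc.le
    have hfi := integrableOn_of_sq hfin hfm hf
    have hHi := integrableOn_of_sq hfin hHm hH2
    have hH1 : (∫ x in Ω, H x) + ∫ x in Ωᶜ, g x = 0 := by
      have h := hparts _ (inHs_one hfin hg)
      rw [gagliardo2_one] at h
      simp only [mul_one, mul_zero] at h
      exact h.symm
    let F : En n → ℝ := fun x => 2 / cns n s * (f x - H x)
    have hFm : Measurable F := (hfm.sub hHm).const_mul _
    have hF2 : IntegrableOn (fun x => F x ^ 2) Ω := by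
      have hfH := integrableOn_mul_of_sq hfm hHm hf hH2
      have h := ((hf.sub (hfH.const_mul 2)).add hH2).const_mul ((2 / cns n s) ^ 2)
      refine h.congr (ae_of_all _ fun x => ?_)
      simp only [F, Pi.add_apply, Pi.sub_apply]
      ring
    have hF0 : ∫ x in Ω, F x = 0 := by
      simp only [F]
      rw [integral_const_mul, integral_sub hfi hHi]
      have : (∫ x in Ω, f x) - ∫ x in Ω, H x = 0 := by linarith
      rw [this, mul_zero]
    obtain ⟨w, hwm, hwe, hw⟩ :=
      exists_energy_representative hs.1 hΩ.1 hΩ.2.1 hΩ.2.2.1 hFm hF2 hF0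
    have hum : Measurable (fun x => 1 * w x + 1 * ψ x) := by fun_prop
    have hue := FinEnergy.add hwm hψm hwe hψe 1 1
    refine ⟨fun x => 1 * w x + 1 * ψ x,
      ⟨hum, FinEnergy.integrableOn_sq hs.1 hΩ.1 hΩ.2.1 hΩ.2.2.1 hum hue, by simp, hue⟩, ?_⟩
    intro v hv
    have hp := hparts v hv
    obtain ⟨hvm, hv2, hvg, hve⟩ := hv
    rw [gagliardo2_add hwm hψm hvm hwe hψe hve, hw v hvm hv2 hve, one_mul, one_mul, mul_add, hp]
    have hfv := integrableOn_mul_of_sq hfm hvm hf hv2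
    have hHv := integrableOn_mul_of_sq hHm hvm hH2 hv2
    have e : cns n s / 2 * ∫ x in Ω, F x * v x
        = (∫ x in Ω, f x * v x) - ∫ x in Ω, H x * v x := by
      rw [← integral_sub hfv hHv, ← integral_const_mul]
      refine integral_congr_ae (ae_of_all _ fun x => ?_)
      simp only [F]
      field_simp
    rw [e]
    ring
  · rintro - u₁ u₂ ⟨⟨hm₁, -, -, he₁⟩, h₁⟩ ⟨⟨hm₂, -, -, he₂⟩, h₂⟩
    have hwm : Measurable (fun x => 1 * u₁ x + (-1) * u₂ x) := by fun_prop
    have hwe : FinEnergy n s Ω (fun x => 1 * u₁ x + (-1) * u₂ x) :=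
      FinEnergy.add hm₁ hm₂ he₁ he₂ 1 (-1)
    obtain ⟨c, hcst⟩ := ae_const_of_orthogonal hΩ.1 hΩ.2.2.1 hwm hwe (fun k => by
      have htm := measurable_trunc (k := (k : ℝ)) hwm
      have hte := FinEnergy.trunc (k := (k : ℝ)) hwm hwe
      have hin : InHs n s Ω g _ := inHs_of_bounded hfin hg htm
        (abs_trunc_le (Nat.cast_nonneg k) _) hte
      have e := (h₁ _ hin).trans (h₂ _ hin).symm
      have e' := mul_left_cancel₀ (half_pos hc).ne' e
      rw [gagliardo2_add hm₁ hm₂ htm he₁ he₂ hte, e']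
      ring)
    exact ⟨c, hcst.mono fun x hx => by simpa [sub_eq_add_neg] using hx⟩
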